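/- For the exponential random graph model with parameter β in the subcritical region, the normalized number of edges W_n = (Σ_{s∈I} Y_s − μ_n)/σ_n converges in distribution, as n → ∞, to a standard normal random variable. -/

import Mathlib

open MeasureTheory ProbabilityTheory Real Finset

noncomputable section

/-- The index set `I = {(i,j) : 1 ≤ i < j ≤ n}` of potential edges on `n` labeled vertices. -/
def EdgeIdx (n : ℕ) : Type := {p : Fin n × Fin n // p.1 < p.2}

instance (n : ℕ) : Fintype (EdgeIdx n) := by unfold EdgeIdx; infer_instance
instance (n : ℕ) : DecidableEq (EdgeIdx n) := by unfold EdgeIdx; infer_instance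

/-- Adjacency of the graph `G_y` encoded by the edge-indicator vector `y`. -/
def yAdj {n : ℕ} (y : EdgeIdx n → Bool) (a b : Fin n) : Bool :=
  if h : a < b then y ⟨(a, b), h⟩ else if h' : b < a then y ⟨(b, a), h'⟩ else false

/-- The number of edges of a graph `H`. -/
def eCount {V : Type} [Fintype V] (H : SimpleGraph V) : ℕ :=
  Nat.card H.edgeSet

/-- `|Hom(H, G_y)|`: the number of injective maps from the vertex set of `H` to `Fin n`
mapping every edge of `H` to an edge of `G_y`. -/
def homCount {V : Type} [Fintype V] {n : ℕ} (H : SimpleGraph V) (y : EdgeIdx n → Bool) : ℕ :=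
  Nat.card {φ : V → Fin n //
    Function.Injective φ ∧ ∀ a b, H.Adj a b → yAdj y (φ a) (φ b) = true}

/-- `|Hom(H, G_y, s)|`: the number of pairs `(φ, (u, v))` where `φ` is injective, `(u, v)` is
an ordered pair of adjacent vertices of `H` with `{φ u, φ v} = s`, and every edge of `H` other
than `{u, v}` is mapped by `φ` to an edge of `G_y` (regardless of whether the edge `s` is
present in `G_y`). -/
def homCountAt {V : Type} [Fintype V] {n : ℕ} (H : SimpleGraph V) (y : EdgeIdx n → Bool)
    (s : EdgeIdx n) : ℕ :=
  Nat.card {t : (V → Fin n) × V × V //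
    Function.Injective t.1 ∧ H.Adj t.2.1 t.2.2 ∧
    Sym2.mk (t.1 t.2.1, t.1 t.2.2) = Sym2.mk (s.1.1, s.1.2) ∧
    ∀ a b, H.Adj a b → Sym2.mk (a, b) ≠ Sym2.mk (t.2.1, t.2.2) →
      yAdj y (t.1 a) (t.1 b) = true}

section ERGM

variable {k : ℕ} (β : Fin (k + 1) → ℝ) (v : Fin (k + 1) → ℕ)
  (H : ∀ j : Fin (k + 1), SimpleGraph (Fin (v j)))

/-- The (unnormalized) ERGM weight `exp (Σ_j β_j n^{2−v_j} |Hom(H_j, G_y)|)`. -/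
def ergmWeight (n : ℕ) (y : EdgeIdx n → Bool) : ℝ :=
  Real.exp (∑ j, β j * (n : ℝ) ^ ((2 : ℤ) - (v j : ℤ)) * (homCount (H j) y : ℝ))

/-- The ERGM normalizing constant. -/
def ergmZ (n : ℕ) : ℝ := ∑ y : EdgeIdx n → Bool, ergmWeight β v H n y

/-- The ERGM probability of the configuration `y`. -/
def ergmProb (n : ℕ) (y : EdgeIdx n → Bool) : ℝ := ergmWeight β v H n y / ergmZ β v H n

/-- Expectation of `G(Y)` under the ERGM. -/
def ergmExp (n : ℕ) (G : (EdgeIdx n → Bool) → ℝ) : ℝ :=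
  ∑ y : EdgeIdx n → Bool, ergmProb β v H n y * G y

/-- Variance of `G(Y)` under the ERGM. -/
def ergmVar (n : ℕ) (G : (EdgeIdx n → Bool) → ℝ) : ℝ :=
  ergmExp β v H n (fun y => (G y - ergmExp β v H n G) ^ 2)

/-- The total number of edges of `G_y`. -/
def edgeSum {n : ℕ} (y : EdgeIdx n → Bool) : ℝ :=
  ∑ s : EdgeIdx n, (if y s then (1 : ℝ) else 0)

/-- `Φ_β(a) = Σ_j β_j e_j a^{e_j − 1}`. -/
def PhiFn : ℝ → ℝ := fun a =>
  ∑ j, β j * (eCount (H j) : ℝ) * a ^ (eCount (H j) - 1)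

/-- `φ_β(a) = e^{2Φ_β(a)} / (e^{2Φ_β(a)} + 1)`. -/
def phiFn : ℝ → ℝ := fun a =>
  Real.exp (2 * PhiFn β v H a) / (Real.exp (2 * PhiFn β v H a) + 1)

/-- `σ_n² = N p (1−p) / (1 − 2 p (1−p) Φ_β'(p))` with `N = n(n−1)/2`. -/
def sigmaSq (p : ℝ) (n : ℕ) : ℝ :=
  ((n : ℝ) * ((n : ℝ) - 1) / 2) * p * (1 - p) /
    (1 - 2 * p * (1 - p) * deriv (PhiFn β v H) p)

/-- `μ_n = E Σ_{s ∈ I} Y_s`. -/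
def muN (n : ℕ) : ℝ := ergmExp β v H n (edgeSum)

/-- The standardized number of edges `W_n`. -/
def Wn (p : ℝ) (n : ℕ) (y : EdgeIdx n → Bool) : ℝ :=
  (edgeSum y - muN β v H n) / Real.sqrt (sigmaSq β v H p n)

end ERGM

/-!
The model is the Gibbs measure of an energy `U` which is a polynomial in the edge indicators whose
nonlinear monomials have nonnegative coefficients, so that the FKG inequality applies. Given the
other edges, the edge `s` is present with probability `sigmoid (∂_s U)`. A function whose
expectation under independent edges of density `q` is known concentrates there (McDiarmid), so if
the model is stochastically dominated by independent edges of density `q`, then with overwhelming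
probability `∂_s U` is at most about `2 Φ(q)`, and the model is dominated at every density slightly
above `φ(q)`. Iterating from `q = 1`, and dually from `q = 0`, forces all `∂_s U` to be close to
`2 Φ(p)`, and all the sums `∑ s, ∂_s ∂_t U` to be close to `2 Φ'(p)`, because `p` is the only fixed
point.

Replacing each indicator in `S = ∑ s, Y_s` by its conditional expectation gives
`Cov(S, G) = Cov(∑ s, sigmoid (∂_s U), G) + E ∑ s, Var(Y_s | rest) ∂_s G`. On the typical event the
sum of the `sigmoid (∂_s U)` behaves like `κ S` with `κ = 2 p (1 - p) Φ'(p) < 1`: the difference is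
`ω`-Lipschitz there, hence its covariance with a monotone `G` is controlled by FKG. This yields
`(1 - κ) Cov(S, G) ≈ p (1 - p) E ∑ s, ∂_s G` for monotone `G` and, adding a multiple of `S`, for
Lipschitz `G`. With `G = sin (t W + θ)` it says that `f t = E cos (t W + θ)` nearly solves
`f' = -t f`, so the characteristic function of `W` tends to `exp (-t ^ 2 / 2)`.
-/

open Function (update update_self update_of_ne update_eq_self update_idem update_comm)

section DiscreteDerivative

variable {I : Type*} [DecidableEq I]

/-- The discrete derivative `F (y with y_s = 1) - F (y with y_s = 0)` of a function on Boolean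
configurations, as a linear operator. -/
def discDeriv (s : I) : ((I → Bool) → ℝ) →ₗ[ℝ] (I → Bool) → ℝ where
  toFun F y := F (update y s true) - F (update y s false)
  map_add' F G := by ext y; simp only [Pi.add_apply]; ring
  map_smul' c F := by ext y; simp only [Pi.smul_apply, smul_eq_mul, RingHom.id_apply]; ring

lemma discDeriv_apply (s : I) (F : (I → Bool) → ℝ) (y : I → Bool) :
    discDeriv s F y = F (update y s true) - F (update y s false) := rfl

lemma discDeriv_update_self (s : I) (F : (I → Bool) → ℝ) (y : I → Bool) (b : Bool) :
    discDeriv s F (update y s b) = discDeriv s F y := by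
  simp [discDeriv_apply]

lemma discDeriv_comm (s t : I) (F : (I → Bool) → ℝ) :
    discDeriv s (discDeriv t F) = discDeriv t (discDeriv s F) := by
  ext y
  rcases eq_or_ne s t with rfl | hst
  · rfl
  · simp only [discDeriv_apply, update_comm hst]
    ring

lemma discDeriv_of_eq_true {s : I} {y : I → Bool} (hs : y s = true) (F : (I → Bool) → ℝ) :
    discDeriv s F y = F y - F (update y s false) := by
  rw [discDeriv_apply, ← hs, update_eq_self]

lemma update_false_le_update_true (s : I) (y : I → Bool) : update y s false ≤ update y s true :=
  update_le_update_iff'.2 (Bool.false_le true)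

lemma discDeriv_nonneg {F : (I → Bool) → ℝ} (hF : Monotone F) (s : I) (y : I → Bool) :
    0 ≤ discDeriv s F y :=
  sub_nonneg.2 (hF (update_false_le_update_true s y))

lemma discDeriv_le_top_sub_bot {F : (I → Bool) → ℝ} (hF : Monotone F) (s : I) (y : I → Bool) :
    discDeriv s F y ≤ F ⊤ - F ⊥ :=
  sub_le_sub (hF le_top) (hF bot_le)

lemma monotoneOn_of_discDeriv_nonneg [Finite I] {K : Set (I → Bool)} (hK : K.OrdConnected)
    {F : (I → Bool) → ℝ}
    (hF : ∀ s y, update y s false ∈ K → update y s true ∈ K → 0 ≤ discDeriv s F y) :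
    MonotoneOn F K := by
  have := Fintype.ofFinite I
  suffices H : ∀ (T : Finset I) (y z : I → Bool), y ∈ K → z ∈ K → y ≤ z →
      (∀ t ∉ T, y t = z t) → F y ≤ F z from
    fun y hy z hz hyz => H univ y z hy hz hyz (by simp)
  intro T
  induction T using Finset.induction_on with
  | empty => exact fun y z _ _ _ h => (congrArg F (funext fun t => h t (by simp))).le
  | insert s T _ ih =>
    intro y z hy hz hyz h
    have hzy : update z s (y s) ≤ z := update_le_self_iff.2 (hyz s)
    have hyz' : y ≤ update z s (y s) := le_update_iff.2 ⟨le_rfl, fun t _ => hyz t⟩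
    have hmem : update z s (y s) ∈ K := hK.out hy hz ⟨hyz', hzy⟩
    refine (ih y _ hy hmem hyz' fun t ht => ?_).trans ?_
    · rcases eq_or_ne t s with rfl | hts
      · rw [update_self]
      · rw [update_of_ne hts, h t (by simp [hts, ht])]
    · cases hys : y s <;> cases hzs : z s
      · rw [← hzs, update_eq_self]
      · rw [hys] at hmem
        rw [← sub_nonneg, ← discDeriv_of_eq_true hzs]
        exact hF s z hmem (by rwa [← hzs, update_eq_self])
      · exact absurd (hyz s) (by simp [hys, hzs])
      · rw [← hzs, update_eq_self]

lemma monotone_of_discDeriv_nonneg [Finite I] {F : (I → Bool) → ℝ}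
    (hF : ∀ s y, 0 ≤ discDeriv s F y) : Monotone F :=
  monotoneOn_univ.1 (monotoneOn_of_discDeriv_nonneg Set.ordConnected_univ fun s y _ _ => hF s y)

lemma add_le_inf_add_sup_of_monotone_discDeriv [Finite I] {U : (I → Bool) → ℝ}
    (hU : ∀ s, Monotone (discDeriv s U)) (a b : I → Bool) :
    U a + U b ≤ U (a ⊓ b) + U (a ⊔ b) := by
  have hmono : MonotoneOn (fun y => U (y ⊔ b) - U y) (Set.Icc (a ⊓ b) a) := by
    refine monotoneOn_of_discDeriv_nonneg Set.ordConnected_Icc fun s y h0 h1 => ?_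
    have ha : a s = true := top_le_iff.1 (by simpa using h1.2 s)
    have hb : b s = false := le_bot_iff.1 (by simpa [ha] using h0.1 s)
    have hsup (c : Bool) : update y s c ⊔ b = update (y ⊔ b) s c := by
      ext t
      rcases eq_or_ne t s with rfl | hts <;> simp [*]
    have := hU s (le_sup_left : y ≤ y ⊔ b)
    simp only [discDeriv_apply, hsup] at this ⊢
    linarith
  have := hmono ⟨le_rfl, inf_le_left⟩ ⟨inf_le_left, le_rfl⟩ inf_le_left
  simp only [sup_eq_right.2 (inf_le_right : a ⊓ b ≤ b)] at this
  linarith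

lemma sum_update_add_sum_update [Fintype I] (s : I) (F : (I → Bool) → ℝ) :
    ∑ y, F (update y s true) + ∑ y, F (update y s false) = 2 * ∑ y, F y := by
  have hinv : Function.Involutive fun y : I → Bool => update y s (!y s) := fun y => by simp
  rw [two_mul, ← Finset.sum_add_distrib]
  nth_rewrite 2 [← Equiv.sum_comp hinv.toPerm F]
  rw [← Finset.sum_add_distrib]
  refine Finset.sum_congr rfl fun y _ => ?_
  rw [Function.Involutive.coe_toPerm]
  cases hs : y s
  · rw [← hs, update_eq_self, hs, Bool.not_false, add_comm]
  · rw [← hs, update_eq_self, hs, Bool.not_true]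

end DiscreteDerivative

section Total

variable {I : Type*}

/-- The indicator that the coordinate `s` is present. -/
def coord (s : I) (y : I → Bool) : ℝ := if y s then 1 else 0

lemma coord_nonneg (s : I) (y : I → Bool) : 0 ≤ coord s y := by
  unfold coord; split_ifs <;> norm_num

lemma coord_le_one (s : I) (y : I → Bool) : coord s y ≤ 1 := by
  unfold coord; split_ifs <;> norm_num

/-- The number of present coordinates. -/
def total [Fintype I] (y : I → Bool) : ℝ := ∑ s, coord s y

lemma abs_total_le [Fintype I] (y : I → Bool) : |total y| ≤ Fintype.card I := by
  rw [total, abs_of_nonneg (Finset.sum_nonneg fun s _ => coord_nonneg s y)]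
  simpa using Finset.sum_le_card_nsmul univ _ _ fun s _ => coord_le_one s y

lemma discDeriv_coord [DecidableEq I] (s t : I) (y : I → Bool) :
    discDeriv s (coord t) y = if t = s then 1 else 0 := by
  rcases eq_or_ne t s with rfl | hts <;> simp [discDeriv_apply, coord, *]

lemma discDeriv_total [Fintype I] [DecidableEq I] (s : I) (y : I → Bool) :
    discDeriv s total y = 1 := by
  have : (total : (I → Bool) → ℝ) = ∑ t, coord t := by ext; simp [total]
  rw [this, map_sum, Finset.sum_apply]
  simp [discDeriv_coord]

lemma monotone_total [Fintype I] : Monotone (total : (I → Bool) → ℝ) := by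
  classical
  exact monotone_of_discDeriv_nonneg fun s y => by rw [discDeriv_total]; exact zero_le_one

end Total

section GibbsMeasure

variable {I : Type*} [Fintype I] [DecidableEq I]

/-- The Gibbs distribution on configurations with energy `U`: the weight of `y` is proportional
to `exp (U y)`. -/
def gibbs (U : (I → Bool) → ℝ) (y : I → Bool) : ℝ := exp (U y) / ∑ z, exp (U z)

lemma gibbs_pos (U : (I → Bool) → ℝ) (y : I → Bool) : 0 < gibbs U y :=
  div_pos (exp_pos _) (Finset.sum_pos (fun _ _ => exp_pos _) univ_nonempty)

lemma sum_gibbs (U : (I → Bool) → ℝ) : ∑ y, gibbs U y = 1 := by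
  simp_rw [gibbs, ← Finset.sum_div]
  exact div_self (Finset.sum_pos (fun _ _ => exp_pos _) univ_nonempty).ne'

/-- The expectation with respect to the Gibbs distribution, as a linear functional. -/
def gibbsMean (U : (I → Bool) → ℝ) : ((I → Bool) → ℝ) →ₗ[ℝ] ℝ where
  toFun F := ∑ y, gibbs U y * F y
  map_add' F G := by simp [mul_add, Finset.sum_add_distrib]
  map_smul' c F := by simp [Finset.mul_sum, mul_left_comm]

variable (U : (I → Bool) → ℝ)

lemma gibbsMean_apply (F : (I → Bool) → ℝ) : gibbsMean U F = ∑ y, gibbs U y * F y := rfl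

lemma gibbsMean_const (c : ℝ) : gibbsMean U (fun _ => c) = c := by
  rw [gibbsMean_apply, ← Finset.sum_mul, sum_gibbs, one_mul]

lemma gibbsMean_const_mul (c : ℝ) (F : (I → Bool) → ℝ) :
    gibbsMean U (fun y => c * F y) = c * gibbsMean U F :=
  map_smul (gibbsMean U) c F

lemma gibbsMean_mono : Monotone (gibbsMean U) := fun _ _ h =>
  Finset.sum_le_sum fun y _ => mul_le_mul_of_nonneg_left (h y) (gibbs_pos U y).le

lemma abs_gibbsMean_le {F G : (I → Bool) → ℝ} (h : ∀ y, |F y| ≤ G y) :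
    |gibbsMean U F| ≤ gibbsMean U G := by
  refine abs_le.2 ⟨?_, gibbsMean_mono U fun y => (abs_le.1 (h y)).2⟩
  rw [← map_neg]
  exact gibbsMean_mono U fun y => (abs_le.1 (h y)).1

/-- The probability of an event under the Gibbs distribution. -/
def gibbsProb (K : Set (I → Bool)) : ℝ := gibbsMean U (K.indicator 1)

lemma gibbsProb_nonneg (K : Set (I → Bool)) : 0 ≤ gibbsProb U K := by
  rw [← map_zero (gibbsMean U)]
  exact gibbsMean_mono U (Set.indicator_nonneg fun _ _ => zero_le_one)

lemma gibbsProb_mono {K L : Set (I → Bool)} (h : K ⊆ L) : gibbsProb U K ≤ gibbsProb U L :=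
  gibbsMean_mono U (Set.indicator_le_indicator_of_subset h fun _ => zero_le_one)

lemma gibbsProb_union_le (K L : Set (I → Bool)) :
    gibbsProb U (K ∪ L) ≤ gibbsProb U K + gibbsProb U L := by
  rw [gibbsProb, gibbsProb, gibbsProb, ← map_add]
  refine gibbsMean_mono U fun y => ?_
  by_cases hK : y ∈ K <;> by_cases hL : y ∈ L <;> simp [hK, hL]

lemma gibbsProb_iUnion_le {J : Type*} [Fintype J] (K : J → Set (I → Bool)) :
    gibbsProb U (⋃ j, K j) ≤ ∑ j, gibbsProb U (K j) := by
  simp only [gibbsProb, ← map_sum]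
  refine gibbsMean_mono U (Set.indicator_le' (fun y hy => ?_) fun y _ => ?_) <;>
    rw [Finset.sum_apply]
  · obtain ⟨j, hj⟩ := Set.mem_iUnion.1 hy
    exact (Set.indicator_of_mem hj _).symm.trans_le (Finset.single_le_sum
      (fun j _ => Set.indicator_nonneg (fun _ _ => zero_le_one) y) (Finset.mem_univ j))
  · exact Finset.sum_nonneg fun j _ => Set.indicator_nonneg (fun _ _ => zero_le_one) y

lemma gibbsMean_le_of_le_on {K : Set (I → Bool)} {F G : (I → Bool) → ℝ} {C : ℝ}
    (hK : ∀ y ∈ K, F y ≤ G y) (hC : ∀ y, F y ≤ G y + C) :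
    gibbsMean U F ≤ gibbsMean U G + C * gibbsProb U Kᶜ := by
  rw [gibbsProb, ← smul_eq_mul, ← map_smul, ← map_add]
  refine gibbsMean_mono U fun y => ?_
  by_cases hy : y ∈ K
  · simpa [hy] using hK y hy
  · simpa [hy] using hC y

lemma abs_gibbsMean_le_of_le_on {K : Set (I → Bool)} {F G : (I → Bool) → ℝ} {C : ℝ}
    (hK : ∀ y ∈ K, |F y| ≤ G y) (hC : ∀ y, |F y| ≤ G y + C) :
    |gibbsMean U F| ≤ gibbsMean U G + C * gibbsProb U Kᶜ := by
  refine abs_le'.2 ⟨?_, ?_⟩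
  · exact gibbsMean_le_of_le_on U (fun y hy => (le_abs_self _).trans (hK y hy))
      fun y => (le_abs_self _).trans (hC y)
  · rw [← map_neg]
    exact gibbsMean_le_of_le_on U (fun y hy => (neg_le_abs _).trans (hK y hy))
      fun y => (neg_le_abs _).trans (hC y)

/-- The covariance with respect to the Gibbs distribution. -/
def gibbsCov (F G : (I → Bool) → ℝ) : ℝ := gibbsMean U (F * G) - gibbsMean U F * gibbsMean U G

lemma gibbsCov_comm (F G : (I → Bool) → ℝ) : gibbsCov U F G = gibbsCov U G F := by
  simp only [gibbsCov, mul_comm]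

lemma gibbsCov_eq_gibbsMean_mul (F G : (I → Bool) → ℝ) :
    gibbsCov U F G = gibbsMean U (fun y => F y * (G y - gibbsMean U G)) := by
  have : (fun y => F y * (G y - gibbsMean U G)) = F * G - gibbsMean U G • F := by
    ext y; simp only [Pi.sub_apply, Pi.mul_apply, Pi.smul_apply, smul_eq_mul]; ring
  rw [this, map_sub, map_smul, gibbsCov, smul_eq_mul, mul_comm (gibbsMean U G)]

lemma gibbsCov_add_left (F₁ F₂ G : (I → Bool) → ℝ) :
    gibbsCov U (F₁ + F₂) G = gibbsCov U F₁ G + gibbsCov U F₂ G := by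
  simp only [gibbsCov, add_mul, map_add]; ring

lemma gibbsCov_sub_left (F₁ F₂ G : (I → Bool) → ℝ) :
    gibbsCov U (F₁ - F₂) G = gibbsCov U F₁ G - gibbsCov U F₂ G := by
  simp only [gibbsCov, sub_mul, map_sub]; ring

lemma gibbsCov_smul_left (c : ℝ) (F G : (I → Bool) → ℝ) :
    gibbsCov U (c • F) G = c * gibbsCov U F G := by
  simp only [gibbsCov, smul_mul_assoc, map_smul, smul_eq_mul]; ring

variable {U}

lemma gibbs_mul_gibbs_le (hU : ∀ s, Monotone (discDeriv s U)) (a b : I → Bool) :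
    gibbs U a * gibbs U b ≤ gibbs U (a ⊓ b) * gibbs U (a ⊔ b) := by
  simp_rw [gibbs, div_mul_div_comm, ← exp_add]
  refine div_le_div_of_nonneg_right (exp_le_exp.2 ?_) (by positivity)
  exact add_le_inf_add_sup_of_monotone_discDeriv hU a b

lemma gibbsCov_nonneg_of_monotone (hU : ∀ s, Monotone (discDeriv s U)) {F G : (I → Bool) → ℝ}
    (hF : Monotone F) (hG : Monotone G) : 0 ≤ gibbsCov U F G := by
  have key := fkg (fun y => F y - F ⊥) (fun y => G y - G ⊥) (gibbs U) (fun y => (gibbs_pos U y).le)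
    (fun y => sub_nonneg.2 (hF bot_le)) (fun y => sub_nonneg.2 (hG bot_le))
    (fun _ _ h => sub_le_sub_right (hF h) _) (fun _ _ h => sub_le_sub_right (hG h) _)
    (gibbs_mul_gibbs_le hU)
  simp only [sum_gibbs, one_mul, mul_sub, sub_mul, Finset.sum_sub_distrib, ← Finset.sum_mul,
    ← mul_assoc] at key
  simp only [gibbsCov, gibbsMean_apply, Pi.mul_apply, ← mul_assoc]
  have h (c : ℝ) : ∑ y, gibbs U y * c * G y = c * ∑ y, gibbs U y * G y := by
    rw [Finset.mul_sum]
    exact Finset.sum_congr rfl fun _ _ => by ring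
  rw [h] at key
  linarith

lemma abs_sub_gibbsMean_le {G : (I → Bool) → ℝ} (hG : Monotone G) (y : I → Bool) :
    |G y - gibbsMean U G| ≤ G ⊤ - G ⊥ := by
  have h0 : G ⊥ ≤ gibbsMean U G := by
    simpa [gibbsMean_const] using gibbsMean_mono U fun y => hG (bot_le : ⊥ ≤ y)
  have h1 : gibbsMean U G ≤ G ⊤ := by
    simpa [gibbsMean_const] using gibbsMean_mono U fun y => hG (le_top : y ≤ ⊤)
  exact abs_sub_le_of_le_of_le (hG bot_le) (hG le_top) h0 h1

end GibbsMeasure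

section ApproximateFKG

variable {I : Type*}

lemma exists_monotone_eqOn_abs_le {F : (I → Bool) → ℝ} {K : Set (I → Bool)} {R : ℝ}
    (hF : MonotoneOn F K) (hR : ∀ y, |F y| ≤ R) :
    ∃ F' : (I → Bool) → ℝ, Monotone F' ∧ Set.EqOn F F' K ∧ ∀ y, |F' y| ≤ R := by
  have hbdd (y : I → Bool) : ∀ x ∈ insert (-R) (F '' (K ∩ Set.Iic y)), x ≤ R := by
    rintro y (rfl | ⟨z, _, rfl⟩)
    · exact neg_le_self ((abs_nonneg _).trans (hR ⊥))
    · exact (abs_le.1 (hR z)).2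
  refine ⟨fun y => sSup (insert (-R) (F '' (K ∩ Set.Iic y))), fun y z h => ?_, fun y hy => ?_,
    fun y => abs_le.2 ⟨le_csSup ⟨R, hbdd y⟩ (Set.mem_insert _ _),
      csSup_le (Set.insert_nonempty _ _) (hbdd y)⟩⟩
  · refine csSup_le_csSup ⟨R, hbdd z⟩ (Set.insert_nonempty _ _) (Set.insert_subset_insert ?_)
    exact Set.image_mono (Set.inter_subset_inter_right _ (Set.Iic_subset_Iic.2 h))
  · suffices h : IsGreatest (insert (-R) (F '' (K ∩ Set.Iic y))) (F y) from h.csSup_eq.symm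
    refine ⟨Or.inr ⟨y, ⟨hy, Set.mem_Iic.2 le_rfl⟩, rfl⟩, ?_⟩
    rintro x (rfl | ⟨z, hz, rfl⟩)
    · exact (abs_le.1 (hR y)).1
    · exact hF hz.1 hy hz.2

variable [Fintype I] [DecidableEq I] {U : (I → Bool) → ℝ}

lemma neg_le_gibbsCov_of_monotoneOn (hU : ∀ s, Monotone (discDeriv s U)) {K : Set (I → Bool)}
    {F G : (I → Bool) → ℝ} {R : ℝ} (hF : MonotoneOn F K) (hR : ∀ y, |F y| ≤ R)
    (hG : Monotone G) :
    -(2 * R * (G ⊤ - G ⊥) * gibbsProb U Kᶜ) ≤ gibbsCov U F G := by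
  obtain ⟨F', hF', heq, hR'⟩ := exists_monotone_eqOn_abs_le hF hR
  refine neg_le_iff_add_nonneg.2 ((gibbsCov_nonneg_of_monotone hU hF' hG).trans ?_)
  rw [gibbsCov_eq_gibbsMean_mul, gibbsCov_eq_gibbsMean_mul]
  refine gibbsMean_le_of_le_on U (fun y hy => by rw [heq hy]) fun y => ?_
  rw [← sub_le_iff_le_add', ← sub_mul]
  refine (le_abs_self _).trans ?_
  rw [abs_mul]
  gcongr
  · linarith [abs_nonneg (F y), hR y]
  · linarith [abs_sub (F' y) (F y), hR y, hR' y]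
  · exact abs_sub_gibbsMean_le hG y

end ApproximateFKG

section Resampling

variable {I : Type*} [DecidableEq I]

/-- The expectation of `F` after the coordinate `s` of `y` is replaced by a Bernoulli variable of
parameter `q`, as a linear operator. -/
def resample (q : ℝ) (s : I) : Module.End ℝ ((I → Bool) → ℝ) where
  toFun F y := q * F (update y s true) + (1 - q) * F (update y s false)
  map_add' F G := by ext y; simp only [Pi.add_apply]; ring
  map_smul' c F := by ext y; simp only [Pi.smul_apply, smul_eq_mul, RingHom.id_apply]; ring

lemma resample_apply (q : ℝ) (s : I) (F : (I → Bool) → ℝ) (y : I → Bool) :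
    resample q s F y = q * F (update y s true) + (1 - q) * F (update y s false) := rfl

/-- The conditional probability, under the Gibbs distribution with energy `U`, that the coordinate
`s` is present given the other coordinates of `y`. -/
def localProb (U : (I → Bool) → ℝ) (s : I) (y : I → Bool) : ℝ := sigmoid (discDeriv s U y)

/-- The conditional variance of the coordinate `s` given the other coordinates of `y`. -/
def localVar (U : (I → Bool) → ℝ) (s : I) (y : I → Bool) : ℝ :=
  localProb U s y * (1 - localProb U s y)

variable (U : (I → Bool) → ℝ) (s : I)

lemma localProb_update_self (y : I → Bool) (b : Bool) :
    localProb U s (update y s b) = localProb U s y := by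
  rw [localProb, localProb, discDeriv_update_self]

lemma localProb_mem_Icc (y : I → Bool) : localProb U s y ∈ Set.Icc 0 1 :=
  ⟨sigmoid_nonneg _, sigmoid_le_one _⟩

lemma localVar_mem_Icc (y : I → Bool) : localVar U s y ∈ Set.Icc 0 1 := by
  have ⟨h0, h1⟩ := localProb_mem_Icc U s y
  exact ⟨mul_nonneg h0 (sub_nonneg.2 h1), mul_le_one₀ h1 (sub_nonneg.2 h1) (sub_le_self _ h0)⟩

variable [Fintype I]

lemma gibbs_update_true (y : I → Bool) :
    gibbs U (update y s true) =
      localProb U s y * (gibbs U (update y s true) + gibbs U (update y s false)) := by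
  have hU : U (update y s true) = U (update y s false) + discDeriv s U y := by
    rw [discDeriv_apply]; ring
  have := exp_pos (discDeriv s U y)
  rw [gibbs, gibbs, localProb, hU, exp_add, sigmoid_def, exp_neg]
  field_simp

lemma gibbsMean_resample (F : (I → Bool) → ℝ) :
    gibbsMean U (fun y => resample (localProb U s y) s F y) = gibbsMean U F := by
  refine mul_left_cancel₀ (two_ne_zero (α := ℝ)) ?_
  rw [gibbsMean_apply, gibbsMean_apply, ← sum_update_add_sum_update s,
    ← sum_update_add_sum_update s, ← Finset.sum_add_distrib, ← Finset.sum_add_distrib]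
  refine Finset.sum_congr rfl fun y _ => ?_
  simp only [resample_apply, localProb_update_self, update_idem]
  linear_combination (F (update y s false) - F (update y s true)) * gibbs_update_true U s y

lemma gibbsMean_coord_sub_localProb_mul (G : (I → Bool) → ℝ) :
    gibbsMean U (fun y => (coord s y - localProb U s y) * G y) =
      gibbsMean U (fun y => localVar U s y * discDeriv s G y) := by
  rw [← gibbsMean_resample U s]
  congr 1
  ext y
  simp only [resample_apply, coord, update_self, localProb_update_self, localVar, discDeriv_apply,
    Bool.false_eq_true, ↓reduceIte]
  ring

end Resampling

section SteinIdentity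

variable {I : Type*} [DecidableEq I] [Fintype I] (U : (I → Bool) → ℝ)

/-- The expected number of present coordinates when all coordinates of `y` are resampled
simultaneously, each given the other ones. -/
def localTotal (y : I → Bool) : ℝ := ∑ s, localProb U s y

/-- The expectation of the sum of all discrete derivatives of `G`. -/
def gibbsGrad (G : (I → Bool) → ℝ) : ℝ := gibbsMean U (∑ s, discDeriv s G)

lemma gibbsGrad_add (F G : (I → Bool) → ℝ) :
    gibbsGrad U (F + G) = gibbsGrad U F + gibbsGrad U G := by
  simp [gibbsGrad, Finset.sum_add_distrib]

lemma gibbsMean_total_sub_localTotal_mul (G : (I → Bool) → ℝ) :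
    gibbsMean U ((total - localTotal U) * G) =
      gibbsMean U (∑ s, fun y => localVar U s y * discDeriv s G y) := by
  rw [map_sum]
  simp_rw [← gibbsMean_coord_sub_localProb_mul]
  rw [← map_sum]
  congr 1
  ext y
  simp [total, localTotal, Finset.sum_mul, sub_mul]

lemma gibbsCov_total_eq (G : (I → Bool) → ℝ) :
    gibbsCov U total G = gibbsCov U (localTotal U) G +
      gibbsMean U (∑ s, fun y => localVar U s y * discDeriv s G y) := by
  have hmean : gibbsMean U total = gibbsMean U (localTotal U) := by
    have h := gibbsMean_total_sub_localTotal_mul U 1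
    have h0 (s : I) : discDeriv s (1 : (I → Bool) → ℝ) = 0 := by ext; simp [discDeriv_apply]
    simp only [h0, Pi.zero_apply, mul_zero, mul_one, map_sub] at h
    exact sub_eq_zero.1 (h.trans (by simp [← Pi.zero_def]))
  rw [← gibbsMean_total_sub_localTotal_mul, gibbsCov, gibbsCov, hmean, sub_mul, map_sub]
  ring

variable {U} {K : Set (I → Bool)} {G : (I → Bool) → ℝ} {v κ ω : ℝ}

lemma abs_gibbsMean_sum_localVar_sub_le (hv : v ∈ Set.Icc 0 1)
    (hK : ∀ y ∈ K, ∀ s, |localVar U s y - v| ≤ ω) (hω : 0 ≤ ω) (hG : Monotone G) :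
    |gibbsMean U (∑ s, fun y => localVar U s y * discDeriv s G y) - v * gibbsGrad U G| ≤
      ω * gibbsGrad U G + Fintype.card I * (G ⊤ - G ⊥) * gibbsProb U Kᶜ := by
  have hd := discDeriv_nonneg hG
  have heq : gibbsMean U (∑ s, fun y => localVar U s y * discDeriv s G y) - v * gibbsGrad U G =
      gibbsMean U fun y => ∑ s, (localVar U s y - v) * discDeriv s G y := by
    rw [gibbsGrad, ← smul_eq_mul, ← map_smul, ← map_sub]
    congr 1
    ext y
    simp [sub_mul, Finset.mul_sum]
  have hbound {C : ℝ} {y : I → Bool} (h : ∀ s, |localVar U s y - v| ≤ C) :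
      |∑ s, (localVar U s y - v) * discDeriv s G y| ≤ C * ∑ s, discDeriv s G y := by
    rw [Finset.mul_sum]
    refine (Finset.abs_sum_le_sum_abs _ _).trans (Finset.sum_le_sum fun s _ => ?_)
    rw [abs_mul, abs_of_nonneg (hd s y)]
    exact mul_le_mul_of_nonneg_right (h s) (hd s y)
  have hrange (y : I → Bool) : ∑ s, discDeriv s G y ≤ Fintype.card I * (G ⊤ - G ⊥) := by
    refine (Finset.sum_le_card_nsmul _ _ _ fun s _ => discDeriv_le_top_sub_bot hG s y).trans_eq ?_
    rw [nsmul_eq_mul, Finset.card_univ]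
  rw [heq, gibbsGrad, ← smul_eq_mul ω, ← map_smul]
  refine abs_gibbsMean_le_of_le_on U (fun y hy => ?_) fun y => ?_
  · simpa using hbound (hK y hy)
  · have h1 := hbound fun s => abs_sub_le_of_le_of_le (localVar_mem_Icc U s y).1
      (localVar_mem_Icc U s y).2 hv.1 hv.2
    have h2 : 0 ≤ ω * ∑ s, discDeriv s G y := mul_nonneg hω (Finset.sum_nonneg fun s _ => hd s y)
    simp only [Pi.smul_apply, Finset.sum_apply, smul_eq_mul]
    linarith [hrange y]

variable (U) in
lemma abs_localTotal_le (y : I → Bool) : |localTotal U y| ≤ Fintype.card I := by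
  have hU := localProb_mem_Icc U
  rw [localTotal, abs_of_nonneg (Finset.sum_nonneg fun s _ => (hU s y).1)]
  simpa using Finset.sum_le_card_nsmul univ _ _ fun s _ => (hU s y).2

lemma abs_gibbsCov_localTotal_sub_le (hU : ∀ s, Monotone (discDeriv s U)) (hKc : K.OrdConnected)
    (hK : ∀ s y, update y s false ∈ K → update y s true ∈ K →
      |discDeriv s (localTotal U) y - κ| ≤ ω)
    (hω : 0 ≤ ω) (hG : Monotone G) :
    |gibbsCov U (localTotal U) G - κ * gibbsCov U total G| ≤ ω * gibbsCov U total G +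
      2 * (Fintype.card I * (1 + |κ| + ω)) * (G ⊤ - G ⊥) * gibbsProb U Kᶜ := by
  have hbound {b : ℝ} (hb : |b| ≤ |κ| + ω) (y : I → Bool) :
      |(localTotal U - b • total : (I → Bool) → ℝ) y| ≤ Fintype.card I * (1 + |κ| + ω) := by
    have h1 : |b * total y| ≤ (|κ| + ω) * Fintype.card I := by
      rw [abs_mul]; gcongr; exact abs_total_le y
    refine (abs_sub _ _).trans ?_
    rw [Pi.smul_apply, smul_eq_mul]
    linarith [abs_localTotal_le U y]
  have hupper : MonotoneOn (-(localTotal U - (κ + ω) • total)) K :=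
    monotoneOn_of_discDeriv_nonneg hKc fun s y h0 h1 => by
      simp only [map_neg, map_sub, map_smul, Pi.neg_apply, Pi.sub_apply, Pi.smul_apply,
        discDeriv_total, smul_eq_mul]
      linarith [(abs_le.1 (hK s y h0 h1)).2]
  have hlower : MonotoneOn (localTotal U - (κ - ω) • total) K :=
    monotoneOn_of_discDeriv_nonneg hKc fun s y h0 h1 => by
      simp only [map_sub, map_smul, Pi.sub_apply, Pi.smul_apply, discDeriv_total, smul_eq_mul]
      linarith [(abs_le.1 (hK s y h0 h1)).1]
  have h1 := neg_le_gibbsCov_of_monotoneOn hU hupper (fun y => by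
    rw [Pi.neg_apply, abs_neg]
    exact hbound ((abs_add_le κ ω).trans_eq (by rw [abs_of_nonneg hω])) y) hG
  have h2 := neg_le_gibbsCov_of_monotoneOn hU hlower
    (hbound ((abs_sub κ ω).trans_eq (by rw [abs_of_nonneg hω]))) hG
  rw [neg_sub, gibbsCov_sub_left, gibbsCov_smul_left] at h1
  rw [gibbsCov_sub_left, gibbsCov_smul_left] at h2
  rw [abs_le]
  constructor <;> linarith

lemma abs_gibbsCov_total_sub_gibbsGrad_le (hU : ∀ s, Monotone (discDeriv s U))
    (hKc : K.OrdConnected) (hv : v ∈ Set.Icc 0 1) (hKv : ∀ y ∈ K, ∀ s, |localVar U s y - v| ≤ ω)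
    (hK : ∀ s y, update y s false ∈ K → update y s true ∈ K →
      |discDeriv s (localTotal U) y - κ| ≤ ω)
    (hω : 0 ≤ ω) (hG : Monotone G) :
    |(1 - κ) * gibbsCov U total G - v * gibbsGrad U G| ≤
      ω * (gibbsCov U total G + gibbsGrad U G) +
        Fintype.card I * (3 + 2 * (|κ| + ω)) * (G ⊤ - G ⊥) * gibbsProb U Kᶜ := by
  have h1 := abs_le.1 (abs_gibbsMean_sum_localVar_sub_le hv hKv hω hG)
  have h2 := abs_le.1 (abs_gibbsCov_localTotal_sub_le hU hKc hK hω hG)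
  have h3 := gibbsCov_total_eq U G
  rw [abs_le]
  constructor <;> linarith

end SteinIdentity

section TypicalConfigurations

lemma abs_sigmoid_sub_le (x y : ℝ) : |sigmoid y - sigmoid x| ≤ |y - x| := by
  have key := convex_univ.norm_image_sub_le_of_norm_hasDerivWithin_le
    (fun z _ => (hasDerivAt_sigmoid z).hasDerivWithinAt) (C := 1) (fun z _ => by
      have := sigmoid_pos z
      have := sigmoid_lt_one z
      exact abs_le.2 ⟨by nlinarith, by nlinarith⟩) (Set.mem_univ x) (Set.mem_univ y)
  rwa [one_mul] at key

lemma abs_sigmoid_mul_one_sub_sigmoid_sub_le (x a : ℝ) :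
    |sigmoid x * (1 - sigmoid x) - sigmoid a * (1 - sigmoid a)| ≤ |x - a| := by
  have hfactor : sigmoid x * (1 - sigmoid x) - sigmoid a * (1 - sigmoid a) =
      (sigmoid x - sigmoid a) * (1 - sigmoid x - sigmoid a) := by ring
  rw [hfactor, abs_mul]
  refine (mul_le_of_le_one_right (abs_nonneg _) (abs_le.2 ⟨?_, ?_⟩)).trans (abs_sigmoid_sub_le a x)
  · linarith [sigmoid_lt_one x, sigmoid_lt_one a]
  · linarith [sigmoid_pos x, sigmoid_pos a]

lemma abs_sigmoid_sub_sub_le {a ε x y : ℝ}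
    (hx : x ∈ Set.Icc (a - ε) (a + ε)) (hy : y ∈ Set.Icc (a - ε) (a + ε)) :
    |sigmoid y - sigmoid x - sigmoid a * (1 - sigmoid a) * (y - x)| ≤ ε * |y - x| := by
  set v := sigmoid a * (1 - sigmoid a)
  have hderiv (x : ℝ) :
      HasDerivAt (fun x => sigmoid x - v * x) (sigmoid x * (1 - sigmoid x) - v) x := by
    simpa using (hasDerivAt_sigmoid x).fun_sub ((hasDerivAt_id' x).const_mul v)
  have key := (convex_Icc (a - ε) (a + ε)).norm_image_sub_le_of_norm_hasDerivWithin_le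
    (fun x _ => (hderiv x).hasDerivWithinAt) (C := ε)
    (fun z hz => (abs_sigmoid_mul_one_sub_sigmoid_sub_le z a).trans
      (abs_sub_le_iff.2 ⟨by linarith [hz.2], by linarith [hz.1]⟩)) hx hy
  rw [norm_eq_abs, norm_eq_abs] at key
  convert key using 2
  ring

variable {I : Type*} [DecidableEq I] [Fintype I]

/-- The sum over `s` of the mixed second derivatives of `U` in the directions `s` and `t`, which
is the effect of the coordinate `t` on the sum of all first derivatives. -/
def curvature (U : (I → Bool) → ℝ) (t : I) : (I → Bool) → ℝ := discDeriv t (∑ s, discDeriv s U)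

lemma curvature_update_self (U : (I → Bool) → ℝ) (t : I) (y : I → Bool) (b : Bool) :
    curvature U t (update y t b) = curvature U t y :=
  discDeriv_update_self t _ y b

lemma curvature_apply (U : (I → Bool) → ℝ) (t : I) (y : I → Bool) :
    curvature U t y =
      ∑ s, (discDeriv s U (update y t true) - discDeriv s U (update y t false)) := by
  simp [curvature, discDeriv_apply t, Finset.sum_sub_distrib]

/-- The event that all first derivatives of `U` are within `ε` of `a` and all its curvatures are
within `ε` of `χ`. -/
def typicalSet (U : (I → Bool) → ℝ) (a χ ε : ℝ) : Set (I → Bool) :=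
  {y | ∀ s, discDeriv s U y ∈ Set.Icc (a - ε) (a + ε) ∧
    curvature U s y ∈ Set.Icc (χ - ε) (χ + ε)}

variable {U : (I → Bool) → ℝ} {a χ ε : ℝ}

lemma ordConnected_typicalSet (hU : ∀ s, Monotone (discDeriv s U))
    (hcurv : ∀ s, Monotone (curvature U s)) : (typicalSet U a χ ε).OrdConnected :=
  ⟨fun _ hx _ hz _ hy s =>
    ⟨⟨(hx s).1.1.trans (hU s hy.1), (hU s hy.2).trans (hz s).1.2⟩,
      (hx s).2.1.trans (hcurv s hy.1), (hcurv s hy.2).trans (hz s).2.2⟩⟩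

lemma abs_localVar_sub_le {y : I → Bool} (hy : y ∈ typicalSet U a χ ε) (s : I) :
    |localVar U s y - sigmoid a * (1 - sigmoid a)| ≤ ε :=
  (abs_sigmoid_mul_one_sub_sigmoid_sub_le _ a).trans
    (abs_sub_le_iff.2 ⟨by linarith [(hy s).1.2], by linarith [(hy s).1.1]⟩)

lemma abs_discDeriv_localTotal_sub_le (hU : ∀ s, Monotone (discDeriv s U)) (hε : 0 ≤ ε)
    {y : I → Bool} {t : I} (h0 : update y t false ∈ typicalSet U a χ ε)
    (h1 : update y t true ∈ typicalSet U a χ ε) :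
    |discDeriv t (localTotal U) y - sigmoid a * (1 - sigmoid a) * χ| ≤ ε * (χ + ε + 1) := by
  have hcurv := (h0 t).2
  rw [curvature_update_self] at hcurv
  have hv0 := sigmoid_pos a
  have hv1 := sigmoid_lt_one a
  set v := sigmoid a * (1 - sigmoid a)
  have hlin : |discDeriv t (localTotal U) y - v * curvature U t y| ≤ ε * curvature U t y := by
    simp only [discDeriv_apply t, localTotal, localProb, curvature_apply, Finset.mul_sum,
      ← Finset.sum_sub_distrib]
    refine (Finset.abs_sum_le_sum_abs _ _).trans (Finset.sum_le_sum fun s _ => ?_)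
    have hs := hU s (update_false_le_update_true t y)
    exact (abs_sigmoid_sub_sub_le (h0 s).1 (h1 s).1).trans_eq
      (by rw [abs_of_nonneg (sub_nonneg.2 hs)])
  have hcurv' : |v * curvature U t y - v * χ| ≤ 1 * ε := by
    rw [← mul_sub, abs_mul]
    gcongr
    · exact abs_le.2 ⟨by nlinarith, by nlinarith⟩
    · exact abs_sub_le_iff.2 ⟨by linarith [hcurv.2], by linarith [hcurv.1]⟩
  linarith [abs_sub_le (discDeriv t (localTotal U) y) (v * curvature U t y) (v * χ),
    mul_le_mul_of_nonneg_left hcurv.2 hε]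

end TypicalConfigurations

section Sweep

variable {I : Type*} [DecidableEq I]

lemma resample_mono {q : ℝ} (hq : q ∈ Set.Icc 0 1) (s : I) : Monotone (resample q s) :=
  fun _ _ h _ => add_le_add (mul_le_mul_of_nonneg_left (h _) hq.1)
    (mul_le_mul_of_nonneg_left (h _) (sub_nonneg.2 hq.2))

lemma monotone_resample {q : ℝ} (hq : q ∈ Set.Icc 0 1) (s : I) {F : (I → Bool) → ℝ}
    (hF : Monotone F) : Monotone (resample q s F) := fun _ _ h =>
  add_le_add
    (mul_le_mul_of_nonneg_left (hF (update_le_update_iff.2 ⟨le_rfl, fun t _ => h t⟩)) hq.1)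
    (mul_le_mul_of_nonneg_left (hF (update_le_update_iff.2 ⟨le_rfl, fun t _ => h t⟩))
      (sub_nonneg.2 hq.2))

lemma abs_resample_le {q C : ℝ} (hq : q ∈ Set.Icc 0 1) (s : I) {F : (I → Bool) → ℝ}
    (hF : ∀ y, |F y| ≤ C) (y : I → Bool) : |resample q s F y| ≤ C := by
  have := convex_Icc (-C) C (abs_le.1 (hF (update y s true))) (abs_le.1 (hF (update y s false)))
    hq.1 (sub_nonneg.2 hq.2) (by ring)
  exact abs_le.2 this

lemma discDeriv_resample_self (q : ℝ) (s : I) (F : (I → Bool) → ℝ) :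
    discDeriv s (resample q s F) = 0 := by
  ext y
  simp [discDeriv_apply, resample_apply]

lemma discDeriv_resample_of_ne (q : ℝ) {s t : I} (hst : s ≠ t) (F : (I → Bool) → ℝ) :
    discDeriv t (resample q s F) = resample q s (discDeriv t F) := by
  ext y
  simp only [discDeriv_apply, resample_apply, update_comm hst]
  ring

lemma abs_discDeriv_resample_le {q C : ℝ} (hq : q ∈ Set.Icc 0 1) (s t : I) {F : (I → Bool) → ℝ}
    (hF : ∀ y, |discDeriv t F y| ≤ C) (y : I → Bool) : |discDeriv t (resample q s F) y| ≤ C := by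
  rcases eq_or_ne s t with rfl | hst
  · rw [discDeriv_resample_self, Pi.zero_apply, abs_zero]
    exact (abs_nonneg _).trans (hF y)
  · rw [discDeriv_resample_of_ne q hst]
    exact abs_resample_le hq s hF y

/-- The expectation after the coordinates in the list `l` are replaced by independent Bernoulli
variables of parameter `q`, as a linear operator. -/
def sweep (q : ℝ) (l : List I) : Module.End ℝ ((I → Bool) → ℝ) := (l.map (resample q)).prod

lemma sweep_nil (q : ℝ) (F : (I → Bool) → ℝ) : sweep q [] F = F := rfl

lemma sweep_cons (q : ℝ) (s : I) (l : List I) (F : (I → Bool) → ℝ) :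
    sweep q (s :: l) F = resample q s (sweep q l F) := rfl

variable {q : ℝ} {F : (I → Bool) → ℝ}

lemma sweep_mono (hq : q ∈ Set.Icc 0 1) (l : List I) : Monotone (sweep q l) := by
  induction l with
  | nil => exact monotone_id
  | cons s l ih => exact (resample_mono hq s).comp ih

lemma monotone_sweep (hq : q ∈ Set.Icc 0 1) (l : List I) (hF : Monotone F) :
    Monotone (sweep q l F) := by
  induction l with
  | nil => exact hF
  | cons s l ih => exact monotone_resample hq s ih

lemma abs_discDeriv_sweep_le (hq : q ∈ Set.Icc 0 1) (l : List I) {C : ℝ} (t : I)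
    (hF : ∀ y, |discDeriv t F y| ≤ C) (y : I → Bool) :
    |discDeriv t (sweep q l F) y| ≤ C := by
  induction l generalizing y with
  | nil => exact hF y
  | cons s l ih => exact abs_discDeriv_resample_le hq s t ih y

end Sweep

section BoundedDifferences

lemma exp_le_add_exp_sq (x : ℝ) : exp x ≤ x + exp (x ^ 2) := by
  have hsq := add_one_le_exp (x ^ 2)
  rcases le_or_gt |x| 1 with h | h
  · linarith [(abs_le.1 (abs_exp_sub_one_sub_id_le h)).2]
  · rcases lt_abs.1 h with h | h
    · have : exp x ≤ exp (x ^ 2) := exp_le_exp.2 (by nlinarith)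
      linarith
    · have : exp x ≤ 1 := exp_le_one_iff.2 (by linarith)
      nlinarith

lemma mul_exp_add_mul_exp_le {q : ℝ} (hq : q ∈ Set.Icc 0 1) (a b : ℝ) :
    q * exp a + (1 - q) * exp b ≤ exp (q * a + (1 - q) * b + (a - b) ^ 2) := by
  have hq' : 0 ≤ 1 - q := sub_nonneg.2 hq.2
  have hsq {r : ℝ} (h0 : 0 ≤ r) (h1 : r ≤ 1) : exp ((r * (a - b)) ^ 2) ≤ exp ((a - b) ^ 2) := by
    rw [mul_pow, exp_le_exp]
    exact mul_le_of_le_one_left (sq_nonneg _) (pow_le_one₀ h0 h1)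
  have ha := (exp_le_add_exp_sq ((1 - q) * (a - b))).trans
    (add_le_add_right (hsq hq' (sub_le_self _ hq.1)) _)
  have hb := (exp_le_add_exp_sq (-(q * (a - b)))).trans
    (add_le_add_right ((neg_sq (q * (a - b))).symm ▸ hsq hq.1 hq.2) _)
  calc q * exp a + (1 - q) * exp b
    _ = exp (q * a + (1 - q) * b) *
        (q * exp ((1 - q) * (a - b)) + (1 - q) * exp (-(q * (a - b)))) := by
      rw [mul_add, mul_left_comm, ← exp_add, mul_left_comm _ (1 - q), ← exp_add]
      congr 3 <;> ring
    _ ≤ exp (q * a + (1 - q) * b) * exp ((a - b) ^ 2) := by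
      refine mul_le_mul_of_nonneg_left ?_ (exp_pos _).le
      linarith [mul_le_mul_of_nonneg_left ha hq.1, mul_le_mul_of_nonneg_left hb hq']
    _ = _ := (exp_add _ _).symm

variable {I : Type*} [DecidableEq I] {q : ℝ} {F : (I → Bool) → ℝ}

lemma resample_exp_le (hq : q ∈ Set.Icc 0 1) (s : I) {c : ℝ}
    (hF : ∀ y, |discDeriv s F y| ≤ c) (y : I → Bool) :
    resample q s (fun y => exp (F y)) y ≤ exp (resample q s F y + c ^ 2) := by
  refine (mul_exp_add_mul_exp_le hq _ _).trans (exp_le_exp.2 (add_le_add_right ?_ _))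
  exact sq_le_sq' (abs_le.1 (hF y)).1 (abs_le.1 (hF y)).2

lemma sweep_exp_le (hq : q ∈ Set.Icc 0 1) {c : I → ℝ}
    (hF : ∀ s y, |discDeriv s F y| ≤ c s) (l : List I) (y : I → Bool) :
    sweep q l (fun y => exp (F y)) y ≤ exp (sweep q l F y + (l.map fun s => c s ^ 2).sum) := by
  induction l generalizing y with
  | nil => simp [sweep_nil]
  | cons s l ih =>
    have hs := resample_exp_le hq s (abs_discDeriv_sweep_le hq l s (hF s)) y
    rw [sweep_cons, sweep_cons, List.map_cons, List.sum_cons, ← add_assoc]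
    set V := (l.map fun s => c s ^ 2).sum
    calc resample q s (sweep q l fun y => exp (F y)) y
      _ ≤ resample q s (exp V • fun y => exp (sweep q l F y)) y :=
        resample_mono hq s (fun y => (ih y).trans_eq (by simp [exp_add, mul_comm])) y
      _ ≤ exp V * exp (resample q s (sweep q l F) y + c s ^ 2) := by
        rw [map_smul, Pi.smul_apply, smul_eq_mul]
        exact mul_le_mul_of_nonneg_left hs (exp_pos _).le
      _ = _ := by rw [← exp_add, add_comm]

/-- McDiarmid's inequality (with a weaker constant in the exponent). -/
lemma sweep_indicator_lt_le [Fintype I] (hq : q ∈ Set.Icc 0 1) {c : I → ℝ} {V δ r : ℝ}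
    (hF : ∀ s y, |discDeriv s F y| ≤ c s) (hV : 0 < V) (hc : ∑ s, c s ^ 2 ≤ V) (hδ : 0 ≤ δ)
    (y : I → Bool) (hr : sweep q univ.toList F y + δ ≤ r) :
    sweep q univ.toList ({y | r < F y}.indicator 1) y ≤ exp (-(δ ^ 2 / (4 * V))) := by
  set μ := δ / (2 * V)
  have hμ : 0 ≤ μ := by positivity
  have hexp := sweep_exp_le hq (F := μ • F) (c := fun s => μ * c s) (fun s y => by
    rw [map_smul, Pi.smul_apply, smul_eq_mul, abs_mul, abs_of_nonneg hμ]
    exact mul_le_mul_of_nonneg_left (hF s y) hμ) univ.toList y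
  have hvar : (univ.toList.map fun s => (μ * c s) ^ 2).sum ≤ μ ^ 2 * V := by
    simp_rw [mul_pow]
    rw [Finset.sum_map_toList, ← Finset.mul_sum]
    exact mul_le_mul_of_nonneg_left hc (sq_nonneg μ)
  calc sweep q univ.toList ({y | r < F y}.indicator 1) y
    _ ≤ sweep q univ.toList (exp (-(μ * r)) • fun y => exp ((μ • F) y)) y := by
      refine sweep_mono hq _ (Set.indicator_le' (fun y hy => ?_) fun y _ => ?_) y
      · rw [Pi.smul_apply, smul_eq_mul, ← exp_add]
        exact one_le_exp (by simpa using mul_le_mul_of_nonneg_left (le_of_lt hy) hμ)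
      · exact (mul_pos (exp_pos _) (exp_pos _)).le
    _ ≤ exp (-(μ * r)) * exp (μ * sweep q univ.toList F y + μ ^ 2 * V) := by
      rw [map_smul, Pi.smul_apply, smul_eq_mul]
      refine mul_le_mul_of_nonneg_left (hexp.trans (exp_le_exp.2 ?_)) (exp_pos _).le
      rw [map_smul]
      exact add_le_add_right hvar _
    _ ≤ exp (-(μ * δ) + μ ^ 2 * V) := by
      rw [← exp_add, exp_le_exp]
      linarith [mul_le_mul_of_nonneg_left hr hμ]
    _ = _ := by congr 1; simp only [μ]; field_simp; ring

end BoundedDifferences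

section Domination

variable {I : Type*} [DecidableEq I] {e q : ℝ} {g : (I → Bool) → ℝ}

lemma le_sweep_extremal (he : e = 1 ∨ e = -1) (hg : Monotone (e • g)) (l : List I) :
    g ≤ sweep ((1 + e) / 2) l g := by
  have hq : (1 + e) / 2 ∈ Set.Icc (0 : ℝ) 1 := by rcases he with rfl | rfl <;> norm_num
  induction l with
  | nil => exact le_rfl
  | cons s l ih =>
    refine le_trans (fun y => ?_) (resample_mono hq s ih)
    have h0 := hg (update_le_self_iff.2 (Bool.false_le (y s)))
    have h1 := hg (le_update_self_iff.2 (Bool.le_true (y s)))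
    simp only [Pi.smul_apply, smul_eq_mul] at h0 h1
    rcases he with rfl | rfl <;> rw [resample_apply] <;> linarith

variable [Fintype I] (U : (I → Bool) → ℝ)

lemma gibbsMean_le_gibbsMean_sweep (he : e = 1 ∨ e = -1) (hq : q ∈ Set.Icc 0 1)
    (hg : Monotone (e • g)) (hg0 : 0 ≤ g) (hg1 : g ≤ 1) (l : List I) :
    gibbsMean U g ≤ gibbsMean U (sweep q l g) +
      (l.map fun s => gibbsProb U {y | e * q < e * localProb U s y}).sum := by
  induction l with
  | nil => simp [sweep_nil]
  | cons s l ih =>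
    rw [List.map_cons, List.sum_cons, ← add_assoc]
    refine ih.trans (add_le_add_left ?_ _)
    rw [← gibbsMean_resample U s (sweep q l g), gibbsProb, ← map_add]
    refine gibbsMean_mono U fun y => ?_
    have hmono := discDeriv_nonneg (monotone_sweep hq l hg) s y
    have hbdd : |discDeriv s (sweep q l g) y| ≤ 1 := abs_discDeriv_sweep_le hq l s (fun y => by
      simpa [discDeriv_apply] using abs_sub_le_of_le_of_le (hg0 (update y s true)) (hg1 _)
        (hg0 (update y s false)) (hg1 _)) y
    have hdiff : resample (localProb U s y) s (sweep q l g) y - sweep q (s :: l) g y =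
        (localProb U s y - q) * discDeriv s (sweep q l g) y := by
      rw [sweep_cons, resample_apply, resample_apply, discDeriv_apply]; ring
    rw [Pi.add_apply, ← sub_le_iff_le_add', hdiff]
    rw [map_smul, map_smul, Pi.smul_apply, smul_eq_mul] at hmono
    by_cases h : y ∈ {y | e * q < e * localProb U s y}
    · rw [Set.indicator_of_mem h, Pi.one_apply]
      refine (le_abs_self _).trans ?_
      rw [abs_mul]
      have ⟨h0, h1⟩ := localProb_mem_Icc U s y
      exact mul_le_one₀ (abs_sub_le_of_le_of_le h0 h1 hq.1 hq.2 |>.trans_eq (sub_zero 1))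
        (abs_nonneg _) hbdd
    · rw [Set.indicator_of_notMem h]
      rw [Set.mem_ofPred_eq, not_lt] at h
      rcases he with rfl | rfl <;> nlinarith

end Domination

section MeanField

open Filter Topology Asymptotics

/-- Decay faster than every power of `n`. -/
abbrev IsNegligible (a : ℕ → ℝ) : Prop := SuperpolynomialDecay atTop (fun n : ℕ => (n : ℝ)) a

lemma isNegligible_exp_neg {c : ℝ} (hc : 0 < c) : IsNegligible fun n => exp (-(c * n)) := by
  intro k
  simpa [Function.comp_def] using (tendsto_rpow_mul_exp_neg_mul_atTop_nhds_zero k c hc).comp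
    tendsto_natCast_atTop_atTop

lemma IsNegligible.of_le {a b : ℕ → ℝ} (hb : IsNegligible b) (ha : ∀ n, 0 ≤ a n)
    (hab : ∀ᶠ n in atTop, a n ≤ b n) : IsNegligible a :=
  hb.trans_eventually_abs_le (hab.mono fun n h => by
    simpa only [Function.comp, abs_of_nonneg (ha n)] using h.trans (le_abs_self _))

variable {I : ℕ → Type*} [∀ n, Fintype (I n)] [∀ n, DecidableEq (I n)]

/-- A family of increasing functions `F n s` which, uniformly in `s`, have expectation close to
`Λ q` and fluctuations of variance `O(1 / n)` when the coordinates are independent Bernoulli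
variables of parameter `q`. -/
structure IsSelfAveraging (F : ∀ n, I n → (I n → Bool) → ℝ) (Λ : ℝ → ℝ) : Prop where
  monotone : ∀ n s, Monotone (F n s)
  bounded_differences : ∃ C > 0, ∀ᶠ n in atTop, ∀ s, ∃ c : I n → ℝ,
    (∀ t y, |discDeriv t (F n s) y| ≤ c t) ∧ n * ∑ t, c t ^ 2 ≤ C
  mean : ∀ q ∈ Set.Icc (0 : ℝ) 1, ∀ η > 0, ∀ᶠ n in atTop, ∀ s y,
    |sweep q univ.toList (F n s) y - Λ q| ≤ η
  continuous : Continuous Λ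

/-- A sequence of energies whose first derivatives and curvatures are approximately `Λ q` and `χ q`
when the coordinates are independent Bernoulli variables of parameter `q`. -/
structure MeanField (U : ∀ n, (I n → Bool) → ℝ) (Λ χ : ℝ → ℝ) : Prop where
  card_le : ∀ n, Fintype.card (I n) ≤ n ^ 2
  field : IsSelfAveraging (fun n s => discDeriv s (U n)) Λ
  curvature : IsSelfAveraging (fun n s => curvature (U n) s) χ

/-- For `e = 1` (resp. `e = -1`), the Gibbs distributions are stochastically dominated by
(resp. dominate) the law of independent Bernoulli variables of parameter `q`, up to a negligible
error. -/
def IsDominated (U : ∀ n, (I n → Bool) → ℝ) (e q : ℝ) : Prop :=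
  ∃ a, IsNegligible a ∧ ∀ᶠ n in atTop, ∀ g : (I n → Bool) → ℝ, Monotone (e • g) → 0 ≤ g → g ≤ 1 →
    gibbsMean (U n) g ≤ gibbsMean (U n) (sweep q univ.toList g) + a n

variable {U : ∀ n, (I n → Bool) → ℝ} {Λ χ : ℝ → ℝ} {e q : ℝ}

lemma isDominated_extremal (U : ∀ n, (I n → Bool) → ℝ) (he : e = 1 ∨ e = -1) :
    IsDominated U e ((1 + e) / 2) :=
  ⟨0, superpolynomialDecay_zero _ _, Eventually.of_forall fun n g hg _ _ => by
    simpa using gibbsMean_mono (U n) (le_sweep_extremal he hg univ.toList)⟩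

lemma monotone_smul_indicator_lt {α : Type*} [Preorder α] {F : α → ℝ} (hF : Monotone F)
    (he : e = 1 ∨ e = -1) (r : ℝ) :
    Monotone (e • {y | r < (e • F) y}.indicator (1 : α → ℝ)) := fun y z hyz => by
  have := hF hyz
  simp only [Pi.smul_apply, smul_eq_mul, Set.indicator_apply, Set.mem_ofPred_eq, Pi.one_apply]
  rcases he with rfl | rfl <;> split_ifs <;> linarith

lemma IsSelfAveraging.isNegligible_tail {F : ∀ n, I n → (I n → Bool) → ℝ}
    (hF : IsSelfAveraging F Λ) (hcard : ∀ n, Fintype.card (I n) ≤ n ^ 2)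
    (he : e = 1 ∨ e = -1) (hq : q ∈ Set.Icc 0 1) (hdom : IsDominated U e q) {r : ℝ}
    (hr : e * Λ q < r) :
    IsNegligible fun n => ∑ s, gibbsProb (U n) {y | r < (e • F n s) y} := by
  have habs : |e| = 1 := by rcases he with rfl | rfl <;> norm_num
  obtain ⟨a, ha, hdom⟩ := hdom
  obtain ⟨C, hC, hvar⟩ := hF.bounded_differences
  obtain ⟨δ, hδ, hδr⟩ : ∃ δ > 0, e * Λ q + δ + δ ≤ r :=
    ⟨(r - e * Λ q) / 2, by linarith, by linarith⟩
  have hbound := ((isNegligible_exp_neg (c := δ ^ 2 / (4 * C)) (by positivity)).add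
    (ha.trans_abs_le fun _ => (abs_abs _).le : IsNegligible fun n => |a n|)).param_pow_mul 2
  refine IsNegligible.of_le hbound
    (fun n => Finset.sum_nonneg fun s _ => gibbsProb_nonneg _ _) ?_
  filter_upwards [hdom, hvar, hF.mean q hq δ hδ, eventually_gt_atTop 0]
    with n hdom hvar hmean hn
  have hn : (0 : ℝ) < n := Nat.cast_pos.2 hn
  have tail (s) : gibbsProb (U n) {y | r < (e • F n s) y} ≤ exp (-(δ ^ 2 / (4 * C) * n)) + a n := by
    obtain ⟨c, hc, hcC⟩ := hvar s
    refine (hdom _ (monotone_smul_indicator_lt (hF.monotone n s) he r)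
      (Set.indicator_nonneg fun _ _ => zero_le_one)
      (Set.indicator_le_self' fun _ _ => zero_le_one)).trans (add_le_add_left ?_ _)
    rw [← gibbsMean_const (U n) (exp _)]
    refine gibbsMean_mono (U n) fun y => (sweep_indicator_lt_le hq (c := c) (V := C / n) (δ := δ)
      (fun t y => ?_) (by positivity) ((le_div_iff₀' hn).2 hcC) hδ.le y ?_).trans_eq ?_
    · rw [map_smul, Pi.smul_apply, smul_eq_mul, abs_mul, habs, one_mul]
      exact hc t y
    · have := abs_le.1 (hmean s y)
      rw [map_smul, Pi.smul_apply, smul_eq_mul]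
      rcases he with rfl | rfl <;> linarith
    · congr 2; field_simp
  calc ∑ s, gibbsProb (U n) {y | r < (e • F n s) y}
    _ ≤ Fintype.card (I n) * (exp (-(δ ^ 2 / (4 * C) * n)) + |a n|) := by
      rw [← nsmul_eq_mul]
      exact Finset.sum_le_card_nsmul univ _ _ fun s _ =>
        (tail s).trans (add_le_add_right (le_abs_self _) _)
    _ ≤ n ^ 2 * (exp (-(δ ^ 2 / (4 * C) * n)) + |a n|) :=
      mul_le_mul_of_nonneg_right (by exact_mod_cast hcard n) (by positivity)

lemma MeanField.isDominated_step (h : MeanField U Λ χ) (he : e = 1 ∨ e = -1)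
    (hq : q ∈ Set.Icc 0 1) (hdom : IsDominated U e q) {q' : ℝ} (hq' : q' ∈ Set.Icc 0 1)
    (hlt : e * sigmoid (Λ q) < e * q') : IsDominated U e q' := by
  have hee : e * (e * Λ q) = Λ q := by rcases he with rfl | rfl <;> ring
  obtain ⟨r, hr, hr'⟩ : ∃ r, e * sigmoid (e * r) < e * q' ∧ e * Λ q < r := by
    have hcont : Continuous fun r => e * sigmoid (e * r) := by fun_prop
    have hev : ∀ᶠ r in 𝓝[>] (e * Λ q), e * sigmoid (e * r) < e * q' :=
      ((hcont.tendsto _).eventually_lt_const (by rwa [hee])).filter_mono nhdsWithin_le_nhds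
    exact (hev.and self_mem_nhdsWithin).exists
  have htail := h.field.isNegligible_tail h.card_le he hq hdom hr'
  refine ⟨_, htail, Eventually.of_forall fun n g hg hg0 hg1 =>
    (gibbsMean_le_gibbsMean_sweep (U n) he hq' hg hg0 hg1 univ.toList).trans
      (add_le_add_right ?_ _)⟩
  rw [Finset.sum_map_toList]
  refine Finset.sum_le_sum fun s _ => gibbsProb_mono (U n) fun y hy => ?_
  by_contra! hle
  refine (hr.trans hy).not_ge ?_
  rw [Set.mem_ofPred_eq, not_lt, Pi.smul_apply, smul_eq_mul] at hle
  rcases he with rfl | rfl <;> simp only [localProb] <;>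
    [have := sigmoid_le_iff.2 hle; have := sigmoid_le_iff.2 (neg_le_neg hle)] <;>
    simpa using this

lemma mem_closure_of_forall_lt {f : ℝ → ℝ} {p b : ℝ} {P : ℝ → Prop} (hf : Continuous f)
    (hpb : p ≤ b) (hlt : ∀ q ∈ Set.Ioc p b, f q < q) (hb : P b)
    (hstep : ∀ q ∈ Set.Icc p b, ∀ q' ∈ Set.Icc p b, P q → f q < q' → P q') :
    p ∈ closure {q | q ∈ Set.Icc p b ∧ P q} := by
  set S := {q | q ∈ Set.Icc p b ∧ P q}
  have hne : S.Nonempty := ⟨b, Set.right_mem_Icc.2 hpb, hb⟩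
  have hbdd : BddBelow S := ⟨p, fun q hq => hq.1.1⟩
  have hmem := csInf_mem_closure hne hbdd
  rcases (le_csInf hne fun q hq => hq.1.1).eq_or_lt with hp | hp
  · rwa [hp]
  · have hle : sInf S ≤ b := csInf_le hbdd ⟨Set.right_mem_Icc.2 hpb, hb⟩
    obtain ⟨q', hq', hq'S⟩ := exists_between (max_lt (hlt _ ⟨hp, hle⟩) hp)
    obtain ⟨hfq', hpq'⟩ := max_lt_iff.1 hq'
    obtain ⟨q, hqS, hq⟩ := ((mem_closure_iff_frequently.1 hmem).and_eventually
      ((hf.tendsto _).eventually_lt_const hfq')).exists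
    have hq'mem : q' ∈ Set.Icc p b := ⟨hpq'.le, hq'S.le.trans hle⟩
    exact absurd (csInf_le hbdd ⟨hq'mem, hstep q hqS.1 q' hq'mem hqS.2 hq⟩) hq'S.not_ge

lemma lt_self_of_unique_fixedPoint {f : ℝ → ℝ} {p b : ℝ} (hf : Continuous f)
    (huniq : ∀ x, f x = x → x = p) (hb : f b < b) {x : ℝ} (hx : x ∈ Set.Ioc p b) : f x < x := by
  by_contra! hle
  obtain ⟨z, hz, hz0⟩ := intermediate_value_Icc' hx.2 (f := fun x => f x - x)
    (hf.sub continuous_id).continuousOn ⟨(sub_neg.2 hb).le, sub_nonneg.2 hle⟩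
  exact (hx.1.trans_le hz.1).ne' (huniq z (sub_eq_zero.1 hz0))

variable {p : ℝ}

lemma MeanField.mem_closure_isDominated (h : MeanField U Λ χ)
    (hp : ∀ q, sigmoid (Λ q) = q ↔ q = p) (he : e = 1 ∨ e = -1) :
    p ∈ closure {q | q ∈ Set.Icc 0 1 ∧ IsDominated U e q} := by
  have hee (x : ℝ) : e * (e * x) = x := by rcases he with rfl | rfl <;> ring
  have hcont : Continuous fun x => e * sigmoid (Λ (e * x)) := by
    have := h.field.continuous
    fun_prop
  have hp0 : 0 < p := (hp p).2 rfl ▸ sigmoid_pos _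
  have hp1 : p < 1 := (hp p).2 rfl ▸ sigmoid_lt_one _
  have hmem {x : ℝ} (hx : x ∈ Set.Icc (e * p) (e * ((1 + e) / 2))) : e * x ∈ Set.Icc 0 1 := by
    obtain ⟨h0, h1⟩ := hx
    rcases he with rfl | rfl <;> constructor <;> linarith
  have hb : e * sigmoid (Λ (e * (e * ((1 + e) / 2)))) < e * ((1 + e) / 2) := by
    rcases he with rfl | rfl <;> norm_num [sigmoid_lt_one, sigmoid_pos]
  have hclosure := mem_closure_of_forall_lt (P := fun x => IsDominated U e (e * x)) hcont
    (by rcases he with rfl | rfl <;> linarith)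
    (fun x hx => lt_self_of_unique_fixedPoint hcont
      (fun x hx => by rw [← (hp (e * x)).1 (by rw [← hee (sigmoid _), hx]), hee]) hb hx)
    (by simpa only [hee] using isDominated_extremal U he)
    fun x hx x' hx' hdom hlt => h.isDominated_step he (hmem hx) hdom (hmem hx')
      (by rwa [hee x'])
  rw [← hee p]
  exact map_mem_closure (continuous_const.mul continuous_id) hclosure fun x hx => ⟨hmem hx.1, hx.2⟩

lemma MeanField.isNegligible_concentration (h : MeanField U Λ χ)
    (hp : ∀ q, sigmoid (Λ q) = q ↔ q = p) {F : ∀ n, I n → (I n → Bool) → ℝ} {φ : ℝ → ℝ}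
    (hF : IsSelfAveraging F φ) {ε : ℝ} (hε : 0 < ε) :
    IsNegligible fun n => ∑ s, gibbsProb (U n) {y | F n s y ∉ Set.Icc (φ p - ε) (φ p + ε)} := by
  have htail (e : ℝ) (he : e = 1 ∨ e = -1) :
      IsNegligible fun n => ∑ s, gibbsProb (U n) {y | e * φ p + ε < (e • F n s) y} := by
    obtain ⟨q, ⟨hq, hdom⟩, hlt⟩ := ((mem_closure_iff_frequently.1
      (h.mem_closure_isDominated hp he)).and_eventually
      (((hF.continuous.const_mul e).tendsto p).eventually_lt_const
        (lt_add_of_pos_right (e * φ p) hε))).exists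
    exact hF.isNegligible_tail h.card_le he hq hdom hlt
  refine IsNegligible.of_le ((htail 1 (Or.inl rfl)).add (htail (-1) (Or.inr rfl)))
    (fun n => Finset.sum_nonneg fun s _ => gibbsProb_nonneg _ _) (Eventually.of_forall fun n => ?_)
  rw [Pi.add_apply, ← Finset.sum_add_distrib]
  refine Finset.sum_le_sum fun s _ => (gibbsProb_mono _ fun y hy => ?_).trans
    (gibbsProb_union_le _ _ _)
  rw [Set.mem_ofPred_eq, Set.mem_Icc, not_and_or, not_le, not_le] at hy
  simp only [Set.mem_union, Set.mem_ofPred_eq, Pi.smul_apply, smul_eq_mul]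
  exact hy.symm.imp (by intro; linarith) (by intro; linarith)

lemma MeanField.isNegligible_typicalSet_compl (h : MeanField U Λ χ)
    (hp : ∀ q, sigmoid (Λ q) = q ↔ q = p) {ε : ℝ} (hε : 0 < ε) :
    IsNegligible fun n => gibbsProb (U n) (typicalSet (U n) (Λ p) (χ p) ε)ᶜ := by
  refine IsNegligible.of_le ((h.isNegligible_concentration hp h.field hε).add
    (h.isNegligible_concentration hp h.curvature hε))
    (fun n => gibbsProb_nonneg _ _) (Eventually.of_forall fun n => ?_)
  rw [Pi.add_apply, ← Finset.sum_add_distrib]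
  refine (gibbsProb_mono _ fun y hy => ?_).trans ((gibbsProb_iUnion_le _ _).trans
    (Finset.sum_le_sum fun s _ => gibbsProb_union_le _ _ _))
  simpa only [typicalSet, Set.mem_compl_iff, Set.mem_ofPred_eq, not_forall, not_and_or,
    Set.mem_iUnion, Set.mem_union] using hy

end MeanField

section AsymptoticStein

open Filter Topology

section

variable {I : Type*} [Fintype I] [DecidableEq I]

lemma le_card_mul_of_discDeriv_le {G : (I → Bool) → ℝ} {δ : ℝ} (hG : ∀ s y, discDeriv s G y ≤ δ) :
    G ⊤ - G ⊥ ≤ Fintype.card I * δ := by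
  have hmono : Monotone (δ • total - G) := monotone_of_discDeriv_nonneg fun s y => by
    simpa [discDeriv_total] using hG s y
  have hbot : total (⊥ : I → Bool) = 0 := by simp [total, coord]
  have htop : total (⊤ : I → Bool) = Fintype.card I := by simp [total, coord]
  have : δ * total ⊥ - G ⊥ ≤ δ * total ⊤ - G ⊤ := hmono bot_le
  rw [hbot, htop] at this
  linarith

lemma gibbsGrad_le_of_discDeriv_le (U : (I → Bool) → ℝ) {G : (I → Bool) → ℝ} {δ : ℝ}
    (hG : ∀ s y, discDeriv s G y ≤ δ) : gibbsGrad U G ≤ Fintype.card I * δ := by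
  rw [gibbsGrad, ← gibbsMean_const U (Fintype.card I * δ)]
  refine gibbsMean_mono U fun y => ?_
  simpa using Finset.sum_le_card_nsmul univ _ _ fun s _ => hG s y

end

variable {I : ℕ → Type*} [∀ n, Fintype (I n)] [∀ n, DecidableEq (I n)]
  {U : ∀ n, (I n → Bool) → ℝ} {Λ χ : ℝ → ℝ} {p : ℝ}

lemma mul_one_sub_mem_Icc_of_sigmoid_eq {x : ℝ} (hx : sigmoid x = p) :
    0 ≤ p * (1 - p) ∧ p * (1 - p) ≤ 1 := by
  subst hx
  have := sigmoid_pos x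
  have := sigmoid_lt_one x
  constructor <;> nlinarith

lemma MeanField.eventually_abs_gibbsCov_total_sub_gibbsGrad_le (h : MeanField U Λ χ)
    (hp : ∀ q, sigmoid (Λ q) = q ↔ q = p) {ω : ℝ} (hω : 0 < ω) :
    ∀ᶠ n in atTop, ∀ G, Monotone G →
      |(1 - p * (1 - p) * χ p) * gibbsCov (U n) total G - p * (1 - p) * gibbsGrad (U n) G| ≤
        ω * (gibbsCov (U n) total G + gibbsGrad (U n) G + (G ⊤ - G ⊥)) := by
  have hfix : sigmoid (Λ p) = p := (hp p).2 rfl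
  have hv := mul_one_sub_mem_Icc_of_sigmoid_eq ((hp p).2 rfl)
  obtain ⟨ε, ⟨hεω, hεχ⟩, hε⟩ : ∃ ε, (ε < ω ∧ ε * (χ p + ε + 1) < ω) ∧ 0 < ε := by
    have hlim : Tendsto (fun ε : ℝ => ε * (χ p + ε + 1)) (𝓝 0) (𝓝 0) := by
      have : Continuous fun ε : ℝ => ε * (χ p + ε + 1) := by fun_prop
      simpa using this.tendsto 0
    exact ((((eventually_lt_nhds hω).and (hlim.eventually_lt_const hω)).filter_mono
      nhdsWithin_le_nhds).and (self_mem_nhdsWithin (s := Set.Ioi 0))).exists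
  have hrare : ∀ᶠ n in atTop, Fintype.card (I n) * (3 + 2 * (|p * (1 - p) * χ p| + ω)) *
      gibbsProb (U n) (typicalSet (U n) (Λ p) (χ p) ε)ᶜ ≤ ω := by
    have hlim := (h.isNegligible_typicalSet_compl hp hε 2).const_mul
      (3 + 2 * (|p * (1 - p) * χ p| + ω))
    rw [mul_zero] at hlim
    filter_upwards [hlim.eventually_le_const hω] with n hn
    have hcard : (Fintype.card (I n) : ℝ) ≤ n ^ 2 := by exact_mod_cast h.card_le n
    have := gibbsProb_nonneg (U n) (typicalSet (U n) (Λ p) (χ p) ε)ᶜ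
    refine le_trans ?_ hn
    rw [mul_comm (Fintype.card _ : ℝ), mul_assoc]
    gcongr
  filter_upwards [hrare] with n hn G hG
  have hU := h.field.monotone n
  refine (abs_gibbsCov_total_sub_gibbsGrad_le (K := typicalSet (U n) (Λ p) (χ p) ε) hU
    (ordConnected_typicalSet hU (h.curvature.monotone n)) hv
    (fun y hy s => ?_) (fun s y h0 h1 => ?_) hω.le hG).trans ?_
  · simpa only [hfix] using (abs_localVar_sub_le hy s).trans hεω.le
  · simpa only [hfix] using (abs_discDeriv_localTotal_sub_le hU hε.le h0 h1).trans hεχ.le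
  · linarith [mul_le_mul_of_nonneg_right hn (sub_nonneg.2 (hG (bot_le : (⊥ : I n → Bool) ≤ ⊤)))]

lemma MeanField.eventually_abs_stein_le_of_monotone (h : MeanField U Λ χ)
    (hp : ∀ q, sigmoid (Λ q) = q ↔ q = p) (hsub : p * (1 - p) * χ p < 1) {η : ℝ} (hη : 0 < η) :
    ∀ᶠ n in atTop, ∀ (G : (I n → Bool) → ℝ) (δ : ℝ), Monotone G → (∀ s y, discDeriv s G y ≤ δ) →
      |(1 - p * (1 - p) * χ p) * gibbsCov (U n) total G - p * (1 - p) * gibbsGrad (U n) G| ≤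
        η * (Fintype.card (I n) * δ) := by
  have hp01 := mul_one_sub_mem_Icc_of_sigmoid_eq ((hp p).2 rfl)
  set v := p * (1 - p)
  obtain ⟨u, hu, hu_eq⟩ : ∃ u, 0 < u ∧ 1 - v * χ p = u := ⟨_, sub_pos.2 hsub, rfl⟩
  obtain ⟨ω, hω, hωu, hω1, hωη⟩ : ∃ ω > 0, ω ≤ u / 2 ∧ ω ≤ 1 ∧ ω * (6 / u + 2) ≤ η :=
    ⟨min (u / 2) (min 1 (η / (6 / u + 2))), by positivity, min_le_left _ _,
      (min_le_right _ _).trans (min_le_left _ _),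
      (le_div_iff₀ (by positivity)).1 ((min_le_right _ _).trans (min_le_right _ _))⟩
  rw [hu_eq]
  filter_upwards [h.eventually_abs_gibbsCov_total_sub_gibbsGrad_le hp hω] with n hn G δ hG hδ
  specialize hn G hG
  have hrange := le_card_mul_of_discDeriv_le hδ
  have hgrad := gibbsGrad_le_of_discDeriv_le (U n) hδ
  have hb : 0 ≤ Fintype.card (I n) * δ := (sub_nonneg.2 (hG bot_le)).trans hrange
  have hcov0 : 0 ≤ gibbsCov (U n) total G :=
    gibbsCov_nonneg_of_monotone (h.field.monotone n) monotone_total hG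
  set b := Fintype.card (I n) * δ
  set c := gibbsCov (U n) total G
  rw [hu_eq] at hn
  have herror : ω * (c + gibbsGrad (U n) G + (G ⊤ - G ⊥)) ≤ ω * (c + 2 * b) :=
    mul_le_mul_of_nonneg_left (by linarith) hω.le
  have hcov : c ≤ 6 / u * b := by
    have hvb : v * gibbsGrad (U n) G ≤ b :=
      (mul_le_mul_of_nonneg_left hgrad hp01.1).trans (mul_le_of_le_one_left hb hp01.2)
    rw [div_mul_eq_mul_div, le_div_iff₀ hu]
    nlinarith [(abs_le.1 hn).2]
  calc _ ≤ ω * (c + 2 * b) := hn.trans herror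
    _ ≤ ω * (6 / u + 2) * b := by linarith [mul_le_mul_of_nonneg_left hcov hω.le]
    _ ≤ η * b := mul_le_mul_of_nonneg_right hωη hb

lemma MeanField.eventually_abs_stein_le (h : MeanField U Λ χ)
    (hp : ∀ q, sigmoid (Λ q) = q ↔ q = p) (hsub : p * (1 - p) * χ p < 1) {η : ℝ} (hη : 0 < η) :
    ∀ᶠ n in atTop, ∀ (G : (I n → Bool) → ℝ) (δ : ℝ), 0 ≤ δ → (∀ s y, |discDeriv s G y| ≤ δ) →
      |(1 - p * (1 - p) * χ p) * gibbsCov (U n) total G - p * (1 - p) * gibbsGrad (U n) G| ≤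
        η * (Fintype.card (I n) * δ) := by
  filter_upwards [h.eventually_abs_stein_le_of_monotone hp hsub (show 0 < η / 3 by positivity)]
    with n hn G δ hδ hG
  have hmono := hn (G + δ • total) (2 * δ)
    (monotone_of_discDeriv_nonneg fun s y => by
      simpa [discDeriv_total] using by linarith [(abs_le.1 (hG s y)).1])
    fun s y => by simpa [discDeriv_total] using by linarith [(abs_le.1 (hG s y)).2]
  have htotal := hn (δ • total) δ
    (monotone_of_discDeriv_nonneg fun s y => by simpa [discDeriv_total] using hδ)
    fun s y => by simp [discDeriv_total]
  rw [gibbsCov_comm, abs_le] at hmono htotal ⊢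
  rw [gibbsCov_add_left, gibbsGrad_add] at hmono
  constructor <;> linarith

end AsymptoticStein

section ScaledTotal

variable {I : Type*} [Fintype I] [DecidableEq I]

lemma abs_sin_sub_sin_sub_le {a b z : ℝ} (hz : z ∈ Set.uIcc a b) :
    |sin b - sin a - (b - a) * cos z| ≤ (b - a) ^ 2 := by
  have hderiv (x : ℝ) : HasDerivAt (fun x => sin x - cos z * x) (cos x - cos z) x := by
    simpa using (hasDerivAt_sin x).fun_sub ((hasDerivAt_id' x).const_mul (cos z))
  have key := (convex_uIcc a b).norm_image_sub_le_of_norm_hasDerivWithin_le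
    (fun x _ => (hderiv x).hasDerivWithinAt) (C := |b - a|)
    (fun x hx => (abs_cos_sub_cos_le x z).trans
      (Set.abs_sub_le_of_uIcc_subset_uIcc (Set.uIcc_subset_uIcc hz hx)))
    Set.left_mem_uIcc Set.right_mem_uIcc
  rw [norm_eq_abs, norm_eq_abs, abs_mul_abs_self, ← sq] at key
  convert key using 2
  ring

/-- The total, centred at its Gibbs mean and divided by `r`. -/
def scaledTotal (U : (I → Bool) → ℝ) (r : ℝ) (y : I → Bool) : ℝ :=
  (total y - gibbsMean U total) / r

variable (U : (I → Bool) → ℝ) {r : ℝ} (t θ : ℝ)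

lemma scaledTotal_update_true (r : ℝ) (s : I) (y : I → Bool) :
    scaledTotal U r (update y s true) = scaledTotal U r (update y s false) + 1 / r := by
  have := discDeriv_total s y
  rw [discDeriv_apply] at this
  rw [scaledTotal, scaledTotal, ← this]
  ring

lemma gibbsCov_total_eq_mul_gibbsMean_scaledTotal_mul (hr : r ≠ 0) (G : (I → Bool) → ℝ) :
    gibbsCov U total G = r * gibbsMean U (fun y => scaledTotal U r y * G y) := by
  rw [gibbsCov_comm, gibbsCov_eq_gibbsMean_mul, ← gibbsMean_const_mul]
  congr 1
  funext y
  rw [scaledTotal]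
  field_simp

lemma abs_discDeriv_sin_scaledTotal_sub_le (r : ℝ) (s : I) (y : I → Bool) :
    |discDeriv s (fun y => sin (t * scaledTotal U r y + θ)) y -
      t / r * cos (t * scaledTotal U r y + θ)| ≤ (t / r) ^ 2 := by
  have hdiff : t * scaledTotal U r (update y s true) + θ -
      (t * scaledTotal U r (update y s false) + θ) = t / r := by
    rw [scaledTotal_update_true]
    ring
  rw [discDeriv_apply, ← hdiff]
  refine abs_sin_sub_sin_sub_le ?_
  rcases hy : y s with _ | _ <;> rw [← hy, update_eq_self]
  exacts [Set.left_mem_uIcc, Set.right_mem_uIcc]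

lemma abs_discDeriv_sin_scaledTotal_le (hr : 0 < r) (s : I) (y : I → Bool) :
    |discDeriv s (fun y => sin (t * scaledTotal U r y + θ)) y| ≤ |t| / r := by
  rw [discDeriv_apply]
  refine (abs_sin_sub_sin_le _ _).trans_eq ?_
  rw [scaledTotal_update_true, ← abs_of_pos hr, ← abs_div, abs_of_pos hr]
  ring_nf

lemma abs_gibbsGrad_sin_scaledTotal_sub_le (r : ℝ) :
    |gibbsGrad U (fun y => sin (t * scaledTotal U r y + θ)) -
      Fintype.card I * (t / r) * gibbsMean U (fun y => cos (t * scaledTotal U r y + θ))| ≤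
      Fintype.card I * (t / r) ^ 2 := by
  rw [gibbsGrad, ← gibbsMean_const_mul, ← map_sub, ← gibbsMean_const U (_ * (t / r) ^ 2)]
  refine abs_gibbsMean_le U fun y => ?_
  rw [Pi.sub_apply, Finset.sum_apply, mul_assoc, ← nsmul_eq_mul, ← nsmul_eq_mul, ← Finset.card_univ,
    ← Finset.sum_const, ← Finset.sum_sub_distrib]
  exact (Finset.abs_sum_le_sum_abs _ _).trans (Finset.sum_le_card_nsmul _ _ _ fun s _ =>
    abs_discDeriv_sin_scaledTotal_sub_le U t θ r s y)

variable {U}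

lemma abs_gibbsMean_scaledTotal_mul_sin_sub_le {u v η : ℝ} (hr : 0 < r) (hu : 0 < u) (hv : 0 < v)
    (hvar : u * r ^ 2 = v * Fintype.card I)
    (hstein : ∀ (G : (I → Bool) → ℝ) (δ : ℝ), 0 ≤ δ → (∀ s y, |discDeriv s G y| ≤ δ) →
      |u * gibbsCov U total G - v * gibbsGrad U G| ≤ η * (Fintype.card I * δ)) :
    |gibbsMean U (fun y => scaledTotal U r y * sin (t * scaledTotal U r y + θ)) -
      t * gibbsMean U (fun y => cos (t * scaledTotal U r y + θ))| ≤ η / v * |t| + t ^ 2 / r := by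
  have hcov := hstein _ _ (by positivity) (abs_discDeriv_sin_scaledTotal_le U t θ hr)
  have hgrad := abs_gibbsGrad_sin_scaledTotal_sub_le U t θ r
  have hcard : (Fintype.card I : ℝ) = u * r ^ 2 / v := by field_simp; linarith
  rw [gibbsCov_total_eq_mul_gibbsMean_scaledTotal_mul U hr.ne'] at hcov
  rw [hcard] at hcov hgrad
  set s := gibbsMean U (fun y => scaledTotal U r y * sin (t * scaledTotal U r y + θ))
  set c := gibbsMean U (fun y => cos (t * scaledTotal U r y + θ))
  set g := gibbsGrad U (fun y => sin (t * scaledTotal U r y + θ))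
  refine le_of_mul_le_mul_left ?_ (mul_pos hu hr)
  calc u * r * |s - t * c|
    _ = |u * r * (s - t * c)| := by rw [abs_mul, abs_of_pos (mul_pos hu hr)]
    _ = |u * (r * s) - v * g + v * (g - u * r ^ 2 / v * (t / r) * c)| := by
      congr 1
      field_simp
      ring
    _ ≤ η * (u * r ^ 2 / v * (|t| / r)) + v * (u * r ^ 2 / v * (t / r) ^ 2) := by
      refine (abs_add_le _ _).trans (add_le_add hcov ?_)
      rw [abs_mul, abs_of_pos hv]
      exact mul_le_mul_of_nonneg_left hgrad hv.le
    _ = u * r * (η / v * |t| + t ^ 2 / r) := by field_simp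

lemma hasDerivAt_gibbsMean_cos (U W : (I → Bool) → ℝ) (θ t : ℝ) :
    HasDerivAt (fun t => gibbsMean U fun y => cos (t * W y + θ))
      (-gibbsMean U fun y => W y * sin (t * W y + θ)) t := by
  simp only [gibbsMean_apply, ← Finset.sum_neg_distrib]
  refine HasDerivAt.fun_sum fun y _ => ?_
  have hlin : HasDerivAt (fun t => t * W y + θ) (W y) t := by
    simpa using ((hasDerivAt_id' t).mul_const (W y)).add_const θ
  refine (hlin.cos.const_mul (gibbs U y)).congr_deriv ?_
  ring

end ScaledTotal

section WeakLimit

open Filter Topology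

-- `exp (x ^ 2 / 2)` is an integrating factor of `f' + x f = 0`.
lemma abs_sub_mul_exp_le {f f' : ℝ → ℝ} {T η t : ℝ} (hf : ∀ x, HasDerivAt f (f' x) x)
    (h : ∀ x, |x| ≤ T → |f' x + x * f x| ≤ η) (ht : |t| ≤ T) :
    |f t - f 0 * exp (-(t ^ 2 / 2))| ≤ η * (exp (T ^ 2 / 2) * T) := by
  have hη : 0 ≤ η := (abs_nonneg _).trans (h t ht)
  have hderiv (x : ℝ) : HasDerivAt (fun x => exp (x ^ 2 / 2) * f x)
      (exp (x ^ 2 / 2) * (f' x + x * f x)) x := by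
    have hsq : HasDerivAt (fun x : ℝ => x ^ 2 / 2) x x := by
      simpa using (hasDerivAt_pow 2 x).div_const 2
    refine (hsq.exp.mul (hf x)).congr_deriv ?_
    ring
  have key := (convex_Icc (-T) T).norm_image_sub_le_of_norm_hasDerivWithin_le
    (C := exp (T ^ 2 / 2) * η) (fun x _ => (hderiv x).hasDerivWithinAt)
    (fun x hx => by
      have hx' : x ^ 2 ≤ T ^ 2 := sq_le_sq' hx.1 hx.2
      rw [norm_eq_abs, abs_mul, abs_of_pos (exp_pos _)]
      gcongr
      exact h x (abs_le.2 hx))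
    (abs_le.1 (abs_zero.trans_le ((abs_nonneg t).trans ht))) (abs_le.1 ht)
  rw [norm_eq_abs, norm_eq_abs, sub_zero] at key
  calc |f t - f 0 * exp (-(t ^ 2 / 2))|
    _ = exp (-(t ^ 2 / 2)) * |exp (t ^ 2 / 2) * f t - exp (0 ^ 2 / 2) * f 0| := by
      rw [← abs_of_pos (exp_pos (-(t ^ 2 / 2))), ← abs_mul, mul_sub, ← mul_assoc, ← exp_add]
      simp [mul_comm]
    _ ≤ 1 * (exp (T ^ 2 / 2) * η * |t|) := by
      gcongr
      exact exp_le_one_iff.2 (by nlinarith)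
    _ ≤ η * (exp (T ^ 2 / 2) * T) := by
      rw [one_mul, mul_comm _ η, mul_assoc]
      gcongr

/-- The law of a function under the Gibbs distribution. -/
def gibbsLaw {I : Type*} [Fintype I] [DecidableEq I] (U W : (I → Bool) → ℝ) : Measure ℝ :=
  ∑ y, ENNReal.ofReal (gibbs U y) • Measure.dirac (W y)

section

variable {I : Type*} [Fintype I] [DecidableEq I] (U W : (I → Bool) → ℝ)

instance : IsProbabilityMeasure (gibbsLaw U W) := by
  refine ⟨?_⟩
  simp only [gibbsLaw, Measure.coe_finsetSum, Finset.sum_apply, Measure.smul_apply, measure_univ,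
    smul_eq_mul, mul_one]
  rw [← ENNReal.ofReal_sum_of_nonneg fun y _ => (gibbs_pos U y).le, sum_gibbs, ENNReal.ofReal_one]

lemma integral_gibbsLaw {E : Type*} [NormedAddCommGroup E] [NormedSpace ℝ E] [CompleteSpace E]
    (ψ : ℝ → E) : ∫ x, ψ x ∂gibbsLaw U W = ∑ y, gibbs U y • ψ (W y) := by
  rw [gibbsLaw, integral_finsetSum_measure fun y _ =>
    (integrable_dirac (by finiteness)).smul_measure ENNReal.ofReal_ne_top]
  refine Finset.sum_congr rfl fun y _ => ?_
  rw [integral_smul_measure, integral_dirac, ENNReal.toReal_ofReal (gibbs_pos U y).le]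

lemma charFun_gibbsLaw (t : ℝ) :
    charFun (gibbsLaw U W) t = (gibbsMean U fun y => cos (t * W y + 0) : ℝ) -
      (gibbsMean U fun y => cos (t * W y + π / 2) : ℝ) * Complex.I := by
  simp only [charFun_apply_real, integral_gibbsLaw, gibbsMean_apply, Complex.ofReal_sum,
    Finset.sum_mul, ← Finset.sum_sub_distrib]
  refine Finset.sum_congr rfl fun y _ => ?_
  push_cast
  rw [Complex.cos_add_pi_div_two, add_zero, Complex.exp_mul_I, Complex.real_smul]
  ring

end

variable {I : ℕ → Type*} [∀ n, Fintype (I n)] [∀ n, DecidableEq (I n)]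
  {U : ∀ n, (I n → Bool) → ℝ} {Λ χ : ℝ → ℝ} {p : ℝ} {r : ℕ → ℝ}

lemma MeanField.eventually_abs_gibbsMean_scaledTotal_mul_sin_sub_le (h : MeanField U Λ χ)
    (hp : ∀ q, sigmoid (Λ q) = q ↔ q = p) (hsub : p * (1 - p) * χ p < 1)
    (hr : Tendsto r atTop atTop)
    (hvar : ∀ n, (1 - p * (1 - p) * χ p) * r n ^ 2 = p * (1 - p) * Fintype.card (I n))
    (T : ℝ) {η : ℝ} (hη : 0 < η) :
    ∀ᶠ n in atTop, ∀ t θ, |t| ≤ T →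
      |gibbsMean (U n) (fun y =>
          scaledTotal (U n) (r n) y * sin (t * scaledTotal (U n) (r n) y + θ)) -
        t * gibbsMean (U n) (fun y => cos (t * scaledTotal (U n) (r n) y + θ))| ≤ η := by
  have hv : 0 < p * (1 - p) := by
    have hfix : sigmoid (Λ p) = p := (hp p).2 rfl
    exact mul_pos (hfix ▸ sigmoid_pos _) (sub_pos.2 (hfix ▸ sigmoid_lt_one _))
  set η' := p * (1 - p) * (η / (2 * (|T| + 1))) with hη'
  filter_upwards [h.eventually_abs_stein_le hp hsub (η := η') (by positivity),
    hr.eventually_gt_atTop 0, hr.eventually_ge_atTop (2 * T ^ 2 / η)] with n hn hr0 hrT t θ ht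
  refine (abs_gibbsMean_scaledTotal_mul_sin_sub_le t θ hr0 (sub_pos.2 hsub) hv (hvar n) hn).trans ?_
  have htT : t ^ 2 ≤ T ^ 2 := sq_le_sq' (abs_le.1 ht).1 (abs_le.1 ht).2
  have hlin : η' / (p * (1 - p)) * |t| ≤ η / 2 := by
    rw [hη', mul_div_cancel_left₀ _ hv.ne', div_mul_eq_mul_div, div_le_div_iff₀ (by positivity)
      two_pos]
    nlinarith [ht.trans (le_abs_self T)]
  have hquad : t ^ 2 / r n ≤ η / 2 := by
    rw [div_le_iff₀ hη] at hrT
    rw [div_le_div_iff₀ hr0 two_pos]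
    linarith
  linarith

lemma MeanField.tendsto_gibbsMean_cos (h : MeanField U Λ χ)
    (hp : ∀ q, sigmoid (Λ q) = q ↔ q = p) (hsub : p * (1 - p) * χ p < 1)
    (hr : Tendsto r atTop atTop)
    (hvar : ∀ n, (1 - p * (1 - p) * χ p) * r n ^ 2 = p * (1 - p) * Fintype.card (I n)) (t θ : ℝ) :
    Tendsto (fun n => gibbsMean (U n) fun y => cos (t * scaledTotal (U n) (r n) y + θ)) atTop
      (𝓝 (cos θ * exp (-(t ^ 2 / 2)))) := by
  rw [Metric.tendsto_nhds]
  intro ε hε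
  set T := |t| + 1
  set M := exp (T ^ 2 / 2) * T
  filter_upwards [h.eventually_abs_gibbsMean_scaledTotal_mul_sin_sub_le hp hsub hr hvar T
    (η := ε / 2 / M) (by positivity)] with n hn
  have hode := abs_sub_mul_exp_le (t := t) (T := T)
    (hasDerivAt_gibbsMean_cos (U n) (scaledTotal (U n) (r n)) θ)
    (fun x hx => by
      rw [neg_add_eq_sub, abs_sub_comm]
      exact hn x θ hx) (by simp [T])
  simp only [zero_mul, zero_add, gibbsMean_const] at hode
  rw [div_mul_cancel₀ _ (by positivity)] at hode
  rw [dist_eq]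
  linarith

theorem MeanField.tendsto_gibbsMean_scaledTotal (h : MeanField U Λ χ)
    (hp : ∀ q, sigmoid (Λ q) = q ↔ q = p) (hsub : p * (1 - p) * χ p < 1)
    (hr : Tendsto r atTop atTop)
    (hvar : ∀ n, (1 - p * (1 - p) * χ p) * r n ^ 2 = p * (1 - p) * Fintype.card (I n))
    (ψ : BoundedContinuousFunction ℝ ℝ) :
    Tendsto (fun n => gibbsMean (U n) fun y => ψ (scaledTotal (U n) (r n) y)) atTop
      (𝓝 (∫ z, ψ z ∂gaussianReal 0 1)) := by
  let μ (n : ℕ) : ProbabilityMeasure ℝ :=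
    ⟨gibbsLaw (U n) (scaledTotal (U n) (r n)), inferInstance⟩
  have hlim : Tendsto μ atTop (𝓝 ⟨gaussianReal 0 1, inferInstance⟩) := by
    refine ProbabilityMeasure.tendsto_of_tendsto_charFun fun t => ?_
    have hcos (θ : ℝ) := (Complex.continuous_ofReal.tendsto _).comp
      (h.tendsto_gibbsMean_cos hp hsub hr hvar t θ)
    convert (hcos 0).sub ((hcos (π / 2)).mul_const Complex.I) using 2
    · exact charFun_gibbsLaw _ _ t
    · simp [charFun_gaussianReal]
  simpa only [μ, ProbabilityMeasure.coe_mk, integral_gibbsLaw, smul_eq_mul, gibbsMean_apply] using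
    ProbabilityMeasure.tendsto_iff_forall_integral_tendsto.1 hlim ψ

end WeakLimit

section Monomial

variable {I : Type*} (T : Finset I)

/-- The indicator that all coordinates in `T` are present. -/
def monomial (y : I → Bool) : ℝ := ∏ t ∈ T, coord t y

lemma monomial_nonneg (y : I → Bool) : 0 ≤ monomial T y :=
  Finset.prod_nonneg fun t _ => coord_nonneg t y

lemma monomial_le_one (y : I → Bool) : monomial T y ≤ 1 :=
  Finset.prod_le_one (fun t _ => coord_nonneg t y) fun t _ => coord_le_one t y

lemma monomial_eq_ite (y : I → Bool) [Decidable (∀ t ∈ T, y t = true)] :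
    monomial T y = if ∀ t ∈ T, y t = true then 1 else 0 := by
  split_ifs with h
  · exact Finset.prod_eq_one fun t ht => by simp [coord, h t ht]
  · push Not at h
    obtain ⟨t, ht, hyt⟩ := h
    exact Finset.prod_eq_zero ht (by simp [coord, hyt])

variable [DecidableEq I]

lemma monomial_update_of_notMem {T : Finset I} {s : I} (hs : s ∉ T) (y : I → Bool) (b : Bool) :
    monomial T (update y s b) = monomial T y :=
  Finset.prod_congr rfl fun t ht => by
    rw [coord, coord, update_of_ne (ne_of_mem_of_not_mem ht hs)]

lemma monomial_update_of_mem {T : Finset I} {s : I} (hs : s ∈ T) (y : I → Bool) (b : Bool) :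
    monomial T (update y s b) = if b then monomial (T.erase s) y else 0 := by
  rw [← monomial_update_of_notMem (Finset.notMem_erase s T) y b, monomial,
    ← Finset.mul_prod_erase T _ hs]
  cases b <;> simp [coord, monomial]

lemma discDeriv_monomial (s : I) :
    discDeriv s (monomial T) = if s ∈ T then monomial (T.erase s) else 0 := by
  ext y
  rw [discDeriv_apply]
  split_ifs with hs
  · simp [monomial_update_of_mem hs]
  · simp [monomial_update_of_notMem hs]

lemma sum_discDeriv_monomial [Fintype I] :
    ∑ s, discDeriv s (monomial T) = ∑ s ∈ T, monomial (T.erase s) := by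
  simp_rw [discDeriv_monomial, Finset.sum_ite_mem, Finset.univ_inter]

lemma sweep_monomial (q : ℝ) {l : List I} (hl : l.Nodup) (y : I → Bool) :
    sweep q l (monomial T) y = q ^ #(T ∩ l.toFinset) * monomial (T \ l.toFinset) y := by
  induction l generalizing y with
  | nil => simp [sweep_nil]
  | cons s l ih =>
    rw [List.nodup_cons] at hl
    have hs : s ∉ l.toFinset := by simpa using hl.1
    simp only [sweep_cons, resample_apply, ih hl.2, List.toFinset_cons]
    by_cases hT : s ∈ T
    · rw [Finset.inter_insert_of_mem hT, Finset.card_insert_of_notMem (by simp [hl.1]),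
        monomial_update_of_mem (Finset.mem_sdiff.2 ⟨hT, hs⟩),
        monomial_update_of_mem (Finset.mem_sdiff.2 ⟨hT, hs⟩), Finset.sdiff_insert, pow_succ]
      simp only [if_true, Bool.false_eq_true, if_false]
      ring
    · rw [Finset.inter_insert_of_notMem hT, monomial_update_of_notMem (by simp [hT]),
        monomial_update_of_notMem (by simp [hT]), Finset.sdiff_insert_of_notMem hT]
      ring

lemma sweep_univ_monomial [Fintype I] (q : ℝ) (y : I → Bool) :
    sweep q univ.toList (monomial T) y = q ^ #T := by
  rw [sweep_monomial T q (Finset.nodup_toList _)]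
  simp [monomial, Finset.sdiff_eq_empty_iff_subset.2 (Finset.subset_univ T)]

end Monomial

section Energy

variable {I A : Type*} [Fintype A]

/-- The energy of a system of interactions `α`, where each `α` has weight `w α` and is realized
when all coordinates in `S α` are present. -/
def energy (w : A → ℝ) (S : A → Finset I) : (I → Bool) → ℝ := ∑ α, w α • monomial (S α)

lemma energy_nonneg {w : A → ℝ} (hw : ∀ α, 0 ≤ w α) (S : A → Finset I) (y : I → Bool) :
    0 ≤ energy w S y := by
  rw [energy, Finset.sum_apply]
  exact Finset.sum_nonneg fun α _ => mul_nonneg (hw α) (monomial_nonneg _ y)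

lemma energy_le {w : A → ℝ} (hw : ∀ α, 0 ≤ w α) (S : A → Finset I) (y : I → Bool) :
    energy w S y ≤ ∑ α, w α := by
  rw [energy, Finset.sum_apply]
  exact Finset.sum_le_sum fun α _ => mul_le_of_le_one_right (hw α) (monomial_le_one _ y)

variable [DecidableEq I]

lemma discDeriv_energy (w : A → ℝ) (S : A → Finset I) (s : I) :
    discDeriv s (energy w S) =
      energy (fun α => if s ∈ S α then w α else 0) fun α => (S α).erase s := by
  simp only [energy, map_sum, map_smul, discDeriv_monomial, smul_ite, ite_smul, smul_zero,
    zero_smul]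

/-- The largest value of the mixed second derivative of the energy in the directions `s`, `t`. -/
def coupling (w : A → ℝ) (S : A → Finset I) (s t : I) : ℝ :=
  ∑ α, if t ∈ (S α).erase s then if s ∈ S α then w α else 0 else 0

lemma sweep_univ_energy [Fintype I] (q : ℝ) (w : A → ℝ) (S : A → Finset I) (y : I → Bool) :
    sweep q univ.toList (energy w S) y = ∑ α, w α * q ^ #(S α) := by
  simp [energy, sweep_univ_monomial]

lemma sum_discDeriv_energy [Fintype I] (w : A → ℝ) (S : A → Finset I) :
    ∑ s, discDeriv s (energy w S) = ∑ α, w α • ∑ s ∈ S α, monomial ((S α).erase s) := by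
  simp only [energy, map_sum, map_smul]
  rw [Finset.sum_comm]
  exact Finset.sum_congr rfl fun α _ => by rw [← Finset.smul_sum, sum_discDeriv_monomial]

lemma sweep_univ_sum_discDeriv_energy [Fintype I] (q : ℝ) (w : A → ℝ) (S : A → Finset I)
    (y : I → Bool) :
    sweep q univ.toList (∑ s, discDeriv s (energy w S)) y =
      ∑ α, w α * (#(S α) * q ^ (#(S α) - 1)) := by
  simp only [sum_discDeriv_energy, map_sum, map_smul, Finset.sum_apply, Pi.smul_apply,
    smul_eq_mul, sweep_univ_monomial]
  refine Finset.sum_congr rfl fun α _ => ?_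
  rw [Finset.sum_congr rfl fun s hs => by rw [Finset.card_erase_of_mem hs], Finset.sum_const,
    nsmul_eq_mul]

lemma sum_discDeriv_energy_le [Fintype I] {w : A → ℝ} (hw : ∀ α, 0 ≤ w α) {S : A → Finset I}
    {D : ℕ} (hS : ∀ α, #(S α) ≤ D) (y : I → Bool) :
    (∑ s, discDeriv s (energy w S)) y ≤ D * ∑ α, w α := by
  rw [sum_discDeriv_energy, Finset.sum_apply, Finset.mul_sum]
  refine Finset.sum_le_sum fun α _ => ?_
  rw [Pi.smul_apply, smul_eq_mul, Finset.sum_apply, mul_comm]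
  refine mul_le_mul_of_nonneg_right ?_ (hw α)
  exact (Finset.sum_le_card_nsmul _ _ 1 fun s _ => monomial_le_one _ y).trans (by simpa using hS α)

end Energy

section Ferromagnet

variable {I A : Type*} [DecidableEq I] {w : A → ℝ} {S : A → Finset I}

/-- All interactions between two or more coordinates are attractive. -/
def IsFerromagnetic (w : A → ℝ) (S : A → Finset I) : Prop := ∀ α, 0 ≤ w α ∨ #(S α) ≤ 1

lemma IsFerromagnetic.erase (h : IsFerromagnetic w S) (s : I) :
    IsFerromagnetic (fun α => if s ∈ S α then w α else 0) fun α => (S α).erase s := fun α => by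
  dsimp only
  split_ifs with hs
  · exact (h α).imp_right fun h => (Finset.card_le_card (Finset.erase_subset s _)).trans h
  · exact Or.inl le_rfl

lemma IsFerromagnetic.second_weight_nonneg (h : IsFerromagnetic w S) (s t : I) (α : A) :
    0 ≤ if t ∈ (S α).erase s then if s ∈ S α then w α else 0 else 0 := by
  split_ifs with ht hs
  · exact (h α).resolve_right fun hS =>
      (Finset.mem_erase.1 ht).1 (Finset.card_le_one.1 hS _ (Finset.mem_of_mem_erase ht) _ hs)
  · exact le_rfl
  · exact le_rfl

variable [Fintype A]

lemma IsFerromagnetic.coupling_nonneg (h : IsFerromagnetic w S) (s t : I) :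
    0 ≤ coupling w S s t :=
  Finset.sum_nonneg fun α _ => h.second_weight_nonneg s t α

lemma IsFerromagnetic.discDeriv_discDeriv_energy_nonneg (h : IsFerromagnetic w S) (s t : I)
    (y : I → Bool) : 0 ≤ discDeriv t (discDeriv s (energy w S)) y := by
  rw [discDeriv_energy, discDeriv_energy]
  exact energy_nonneg (h.second_weight_nonneg s t) _ y

lemma IsFerromagnetic.abs_discDeriv_discDeriv_energy_le (h : IsFerromagnetic w S) (s t : I)
    (y : I → Bool) : |discDeriv t (discDeriv s (energy w S)) y| ≤ coupling w S s t := by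
  rw [abs_of_nonneg (h.discDeriv_discDeriv_energy_nonneg s t y), discDeriv_energy,
    discDeriv_energy]
  exact energy_le (h.second_weight_nonneg s t) _ y

lemma IsFerromagnetic.monotone_discDeriv_energy [Finite I] (h : IsFerromagnetic w S) (s : I) :
    Monotone (discDeriv s (energy w S)) :=
  monotone_of_discDeriv_nonneg fun t y => h.discDeriv_discDeriv_energy_nonneg s t y

variable [Fintype I]

lemma curvature_eq_sum_discDeriv (U : (I → Bool) → ℝ) (t : I) :
    curvature U t = ∑ s, discDeriv s (discDeriv t U) := by
  rw [curvature, map_sum]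
  exact Finset.sum_congr rfl fun s _ => discDeriv_comm t s U

lemma IsFerromagnetic.monotone_curvature_energy (h : IsFerromagnetic w S) (t : I) :
    Monotone (curvature (energy w S) t) := fun y z hyz => by
  simp only [curvature_eq_sum_discDeriv, discDeriv_energy w, Finset.sum_apply]
  exact Finset.sum_le_sum fun s _ => (h.erase t).monotone_discDeriv_energy s hyz

lemma IsFerromagnetic.abs_discDeriv_curvature_energy_le (h : IsFerromagnetic w S) {D : ℕ}
    (hS : ∀ α, #(S α) ≤ D) (t u : I) (y : I → Bool) :
    |discDeriv u (curvature (energy w S) t) y| ≤ D * coupling w S t u := by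
  rw [abs_of_nonneg (discDeriv_nonneg (h.monotone_curvature_energy t) u y),
    curvature_eq_sum_discDeriv, map_sum]
  simp only [discDeriv_comm u, discDeriv_energy w S t, discDeriv_energy _ _ u]
  exact sum_discDeriv_energy_le (h.second_weight_nonneg t u)
    (fun α => (Finset.card_le_card ((Finset.erase_subset _ _).trans
      (Finset.erase_subset _ _))).trans (hS α)) y

lemma sum_coupling (w : A → ℝ) (S : A → Finset I) (s : I) :
    ∑ t, coupling w S s t = ∑ α, if s ∈ S α then w α * (#(S α) - 1 : ℕ) else 0 := by
  unfold coupling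
  rw [Finset.sum_comm]
  refine Finset.sum_congr rfl fun α _ => ?_
  rw [Finset.sum_ite_mem, Finset.univ_inter, Finset.sum_const, nsmul_eq_mul]
  split_ifs with hs
  · rw [Finset.card_erase_of_mem hs, mul_comm]
  · rw [mul_zero]

lemma IsFerromagnetic.mul_sum_coupling_sq_le (h : IsFerromagnetic w S) {c C : ℝ} (s : I)
    (hC : ∀ t, c * coupling w S s t ≤ C) :
    c * ∑ t, coupling w S s t ^ 2 ≤
      C * ∑ α, if s ∈ S α then w α * (#(S α) - 1 : ℕ) else 0 := by
  rw [← sum_coupling, Finset.mul_sum, Finset.mul_sum]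
  refine Finset.sum_le_sum fun t _ => ?_
  rw [sq, ← mul_assoc]
  exact mul_le_mul_of_nonneg_right (hC t) (h.coupling_nonneg s t)

lemma sweep_univ_discDeriv_energy (q : ℝ) (w : A → ℝ) (S : A → Finset I) (s : I) (y : I → Bool) :
    sweep q univ.toList (discDeriv s (energy w S)) y =
      ∑ α, if s ∈ S α then w α * q ^ (#(S α) - 1) else 0 := by
  rw [discDeriv_energy, sweep_univ_energy]
  refine Finset.sum_congr rfl fun α _ => ?_
  split_ifs with hs
  · rw [Finset.card_erase_of_mem hs]
  · rw [zero_mul]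

lemma sweep_univ_curvature_energy (q : ℝ) (w : A → ℝ) (S : A → Finset I) (s : I) (y : I → Bool) :
    sweep q univ.toList (curvature (energy w S) s) y =
      ∑ α, if s ∈ S α then w α * ((#(S α) - 1 : ℕ) * q ^ (#(S α) - 2)) else 0 := by
  rw [curvature_eq_sum_discDeriv]
  simp_rw [discDeriv_energy w]
  rw [sweep_univ_sum_discDeriv_energy]
  refine Finset.sum_congr rfl fun α _ => ?_
  split_ifs with hs
  · rw [Finset.card_erase_of_mem hs, Nat.sub_sub]
  · rw [zero_mul]

end Ferromagnet

section MeanFieldEnergy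

open Filter

variable {I A : ℕ → Type*} [∀ n, Fintype (I n)] [∀ n, DecidableEq (I n)] [∀ n, Fintype (A n)]
  {w : ∀ n, A n → ℝ} {S : ∀ n, A n → Finset (I n)} {Λ χ : ℝ → ℝ}

theorem meanField_energy (hcard : ∀ n, Fintype.card (I n) ≤ n ^ 2)
    (hw : ∀ n, IsFerromagnetic (w n) (S n)) {D : ℕ} (hS : ∀ n α, #(S n α) ≤ D) {C : ℝ}
    (hC : ∀ᶠ n in atTop, ∀ s t, n * coupling (w n) (S n) s t ≤ C)
    (hΛ : ∀ q ∈ Set.Icc (0 : ℝ) 1, ∀ η > 0, ∀ᶠ n in atTop, ∀ s,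
      |(∑ α, if s ∈ S n α then w n α * q ^ (#(S n α) - 1) else 0) - Λ q| ≤ η)
    (hχ : ∀ q ∈ Set.Icc (0 : ℝ) 1, ∀ η > 0, ∀ᶠ n in atTop, ∀ s,
      |(∑ α, if s ∈ S n α then w n α * ((#(S n α) - 1 : ℕ) * q ^ (#(S n α) - 2)) else 0) -
        χ q| ≤ η)
    (hΛc : Continuous Λ) (hχc : Continuous χ) :
    MeanField (fun n => energy (w n) (S n)) Λ χ := by
  have hsq : ∀ᶠ n in atTop, ∀ s,
      n * ∑ t, coupling (w n) (S n) s t ^ 2 ≤ |C| * (|χ 1| + 1) := by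
    filter_upwards [hC, hχ 1 ⟨zero_le_one, le_rfl⟩ 1 one_pos] with n hC hχ s
    refine ((hw n).mul_sum_coupling_sq_le s fun t => (hC s t).trans (le_abs_self C)).trans ?_
    have hmean := (abs_le.1 (hχ s)).2
    simp only [one_pow, mul_one] at hmean
    gcongr
    linarith [le_abs_self (χ 1)]
  refine ⟨hcard, ⟨fun n s => (hw n).monotone_discDeriv_energy s,
    ⟨|C| * (|χ 1| + 1) + 1, by positivity, hsq.mono fun n hn s =>
      ⟨_, (hw n).abs_discDeriv_discDeriv_energy_le s, (hn s).trans (by linarith)⟩⟩,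
    fun q hq η hη => ?_, hΛc⟩, ⟨fun n s => (hw n).monotone_curvature_energy s,
    ⟨D ^ 2 * (|C| * (|χ 1| + 1)) + 1, by positivity, hsq.mono fun n hn s =>
      ⟨_, (hw n).abs_discDeriv_curvature_energy_le (hS n) s, ?_⟩⟩,
    fun q hq η hη => ?_, hχc⟩⟩
  · simpa only [sweep_univ_discDeriv_energy] using (hΛ q hq η hη).mono fun n hn s _ => hn s
  · simp_rw [mul_pow, ← Finset.mul_sum]
    rw [mul_left_comm]
    have := mul_le_mul_of_nonneg_left (hn s) (sq_nonneg (D : ℝ))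
    linarith
  · simpa only [sweep_univ_curvature_energy] using (hχ q hq η hη).mono fun n hn s _ => hn s

end MeanFieldEnergy

section Embedding

variable {V W : Type*} [Fintype V] [Fintype W] [DecidableEq W]

lemma card_embedding_eqOn_mul_pow_le [DecidableEq V] (T : Finset V) (g : V → W) :
    #{φ : V ↪ W | ∀ a ∈ T, φ a = g a} * Fintype.card W ^ #T ≤
      Fintype.card W ^ Fintype.card V := by
  have h : #{φ : V ↪ W | ∀ a ∈ T, φ a = g a} ≤
      #(Fintype.piFinset fun a => if a ∈ T then {g a} else univ) := by
    refine Finset.card_le_card_of_injOn (fun φ => φ) (fun φ hφ => ?_)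
      fun φ _ χ _ h => DFunLike.coe_injective h
    refine Finset.mem_coe.2 (Fintype.mem_piFinset.2 fun a => ?_)
    split_ifs with ha
    · exact Finset.mem_singleton.2 ((Finset.mem_filter.1 hφ).2 a ha)
    · exact mem_univ _
  have hpi : #(Fintype.piFinset fun a => if a ∈ T then {g a} else univ) =
      Fintype.card W ^ #Tᶜ := by
    simp_rw [Fintype.card_piFinset, apply_ite Finset.card, Finset.card_singleton,
      Finset.card_univ]
    rw [Finset.prod_ite, Finset.prod_const_one, one_mul, Finset.prod_const,
      Finset.compl_eq_univ_sdiff, Finset.sdiff_eq_filter]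
  calc _ ≤ Fintype.card W ^ #Tᶜ * Fintype.card W ^ #T :=
        Nat.mul_le_mul_right _ (h.trans_eq hpi)
    _ = _ := by rw [← pow_add, Finset.card_compl, Nat.sub_add_cancel (Finset.card_le_univ T)]

lemma card_embedding_apply_eq_mul_pow_three_le {x y z : W} (hxy : x ≠ y) (hxz : x ≠ z)
    (hyz : y ≠ z) (a b c : V) :
    #{φ : V ↪ W | φ a = x ∧ φ b = y ∧ φ c = z} * Fintype.card W ^ 3 ≤
      Fintype.card W ^ Fintype.card V := by
  classical
  rcases Finset.eq_empty_or_nonempty {φ : V ↪ W | φ a = x ∧ φ b = y ∧ φ c = z} with h | ⟨φ, hφ⟩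
  · simp [h]
  · obtain ⟨-, rfl, rfl, rfl⟩ := Finset.mem_filter.1 hφ
    have habc : #{a, b, c} = 3 :=
      Finset.card_eq_three.2 ⟨a, b, c, ne_of_apply_ne φ hxy, ne_of_apply_ne φ hxz,
        ne_of_apply_ne φ hyz, rfl⟩
    simpa [habc] using card_embedding_eqOn_mul_pow_le {a, b, c} φ

lemma card_embedding_exists_apply_eq_mul_pow_three_le {x y z : W} (hxy : x ≠ y) (hxz : x ≠ z)
    (hyz : y ≠ z) :
    #{φ : V ↪ W | (∃ a, φ a = x) ∧ (∃ b, φ b = y) ∧ ∃ c, φ c = z} * Fintype.card W ^ 3 ≤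
      Fintype.card V ^ 3 * Fintype.card W ^ Fintype.card V := by
  classical
  have hcover : ({φ | (∃ a, φ a = x) ∧ (∃ b, φ b = y) ∧ ∃ c, φ c = z} : Finset (V ↪ W)) ⊆
      univ.biUnion fun t : V × V × V => {φ | φ t.1 = x ∧ φ t.2.1 = y ∧ φ t.2.2 = z} :=
    fun φ hφ => by
      obtain ⟨-, ⟨a, ha⟩, ⟨b, hb⟩, c, hc⟩ := Finset.mem_filter.1 hφ
      exact Finset.mem_biUnion.2 ⟨(a, b, c), mem_univ _, Finset.mem_filter.2
        ⟨mem_univ _, ha, hb, hc⟩⟩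
  calc _ ≤ (∑ t : V × V × V, #{φ : V ↪ W | φ t.1 = x ∧ φ t.2.1 = y ∧ φ t.2.2 = z}) *
        Fintype.card W ^ 3 :=
        Nat.mul_le_mul_right _ ((Finset.card_le_card hcover).trans Finset.card_biUnion_le)
    _ ≤ ∑ _t : V × V × V, Fintype.card W ^ Fintype.card V := by
        rw [Finset.sum_mul]
        exact Finset.sum_le_sum fun t _ =>
          card_embedding_apply_eq_mul_pow_three_le hxy hxz hyz t.1 t.2.1 t.2.2
    _ = _ := by
        rw [Finset.sum_const, Finset.card_univ, Fintype.card_prod, Fintype.card_prod, smul_eq_mul]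
        ring

end Embedding

section EdgeImage

variable {n : ℕ}

lemma edgeIdx_mk_injective : Function.Injective fun s : EdgeIdx n => s(s.1.1, s.1.2) := by
  rintro ⟨⟨a, b⟩, hab⟩ ⟨⟨c, d⟩, hcd⟩ h
  rcases Sym2.eq_iff.1 h with ⟨h1, h2⟩ | ⟨h1, h2⟩
  · exact Subtype.ext (Prod.ext h1 h2)
  · dsimp only at hab hcd h1 h2
    subst h1 h2
    exact absurd hab hcd.not_gt

lemma exists_edgeIdx_mk_eq {a b : Fin n} (hab : a ≠ b) :
    ∃ s : EdgeIdx n, s(s.1.1, s.1.2) = s(a, b) := by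
  rcases hab.lt_or_gt with h | h
  · exact ⟨⟨(a, b), h⟩, rfl⟩
  · exact ⟨⟨(b, a), h⟩, Sym2.eq_swap⟩

lemma exists_mem_edgeIdx_of_ne {s t : EdgeIdx n} (hst : s ≠ t) :
    ∃ x, (x = t.1.1 ∨ x = t.1.2) ∧ s.1.1 ≠ x ∧ s.1.2 ≠ x := by
  by_contra! h
  have h1 := h t.1.1 (Or.inl rfl)
  have h2 := h t.1.2 (Or.inr rfl)
  have hs := s.2
  have ht := t.2
  exact hst (Subtype.ext (Prod.ext (by grind) (by grind)))

lemma yAdj_eq (y : EdgeIdx n → Bool) {a b : Fin n} {s : EdgeIdx n}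
    (hs : s(s.1.1, s.1.2) = s(a, b)) : yAdj y a b = y s := by
  obtain ⟨⟨c, d⟩, hcd⟩ := s
  rcases Sym2.eq_iff.1 hs with ⟨h1, h2⟩ | ⟨h1, h2⟩ <;> dsimp only at hcd h1 h2 <;> subst h1 h2
  · simp [yAdj, hcd]
  · simp [yAdj, hcd, hcd.not_gt]

open Classical in
/-- The edges of a graph on `Fin n`, as elements of the index set. -/
def edgeIdxFinset (G : SimpleGraph (Fin n)) : Finset (EdgeIdx n) := {s | G.Adj s.1.1 s.1.2}

lemma mem_edgeIdxFinset {G : SimpleGraph (Fin n)} {s : EdgeIdx n} :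
    s ∈ edgeIdxFinset G ↔ s(s.1.1, s.1.2) ∈ G.edgeSet := by
  simp [edgeIdxFinset]

lemma card_edgeIdxFinset (G : SimpleGraph (Fin n)) : #(edgeIdxFinset G) = eCount G := by
  have himg : G.edgeSet =
      (fun s : EdgeIdx n => s(s.1.1, s.1.2)) '' (edgeIdxFinset G : Set (EdgeIdx n)) := by
    ext e
    induction e using Sym2.ind with
    | _ a b =>
      simp only [Set.mem_image, Finset.mem_coe, mem_edgeIdxFinset]
      constructor
      · intro h
        obtain ⟨s, hs⟩ := exists_edgeIdx_mk_eq (G.ne_of_adj h)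
        exact ⟨s, hs ▸ h, hs⟩
      · rintro ⟨s, hs, h⟩
        exact h ▸ hs
  rw [eCount, Nat.card_coe_set_eq, himg, Set.ncard_image_of_injective _ edgeIdx_mk_injective,
    Set.ncard_coe_finset]

lemma card_edgeIdx (n : ℕ) : Fintype.card (EdgeIdx n) = n.choose 2 := by
  have huniv : edgeIdxFinset (⊤ : SimpleGraph (Fin n)) = univ := by
    ext s
    simp [mem_edgeIdxFinset, s.2.ne]
  rw [← Finset.card_univ, ← huniv, card_edgeIdxFinset, eCount, Nat.card_eq_fintype_card,
    ← SimpleGraph.edgeFinset_card, SimpleGraph.card_edgeFinset_top_eq_card_choose_two,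
    Fintype.card_fin]

variable {V : Type}

/-- The potential edges covered by the image of `H` under an embedding. -/
def edgeImage (H : SimpleGraph V) (φ : V ↪ Fin n) : Finset (EdgeIdx n) :=
  edgeIdxFinset (H.map φ)

lemma mem_edgeImage {H : SimpleGraph V} {φ : V ↪ Fin n} {s : EdgeIdx n} :
    s ∈ edgeImage H φ ↔ ∃ a b, H.Adj a b ∧ φ a = s.1.1 ∧ φ b = s.1.2 := by
  rw [edgeImage, mem_edgeIdxFinset, SimpleGraph.mem_edgeSet, SimpleGraph.map_adj]

variable (H : SimpleGraph V)

lemma forall_mem_edgeImage_iff (y : EdgeIdx n → Bool) (φ : V ↪ Fin n) :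
    (∀ s ∈ edgeImage H φ, y s = true) ↔ ∀ a b, H.Adj a b → yAdj y (φ a) (φ b) = true := by
  constructor
  · intro h a b hab
    obtain ⟨s, hs⟩ := exists_edgeIdx_mk_eq (φ.injective.ne (H.ne_of_adj hab))
    rw [yAdj_eq y hs]
    refine h s ?_
    rw [edgeImage, mem_edgeIdxFinset, hs, SimpleGraph.mem_edgeSet]
    exact (SimpleGraph.map_adj _ _ _ _).2 ⟨a, b, hab, rfl, rfl⟩
  · intro h s hs
    obtain ⟨a, b, hab, ha, hb⟩ := mem_edgeImage.1 hs
    rw [← yAdj_eq y (s := s) (a := φ a) (b := φ b) (by rw [ha, hb])]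
    exact h a b hab

variable [Fintype V]

lemma card_edgeImage (φ : V ↪ Fin n) : #(edgeImage H φ) = eCount H := by
  rw [edgeImage, card_edgeIdxFinset, eCount, eCount, SimpleGraph.edgeSet_map,
    Nat.card_coe_set_eq, Nat.card_coe_set_eq,
    Set.ncard_image_of_injective _ φ.sym2Map.injective]

lemma homCount_eq_sum (y : EdgeIdx n → Bool) :
    (homCount H y : ℝ) = ∑ φ : V ↪ Fin n, monomial (edgeImage H φ) y := by
  classical
  simp_rw [monomial_eq_ite, forall_mem_edgeImage_iff]
  rw [Finset.sum_boole, ← Fintype.card_subtype, ← Nat.card_eq_fintype_card, homCount]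
  congr 1
  exact Nat.card_congr
    { toFun := fun f => ⟨⟨f.1, f.2.1⟩, f.2.2⟩
      invFun := fun f => ⟨f.1, f.1.injective, f.2⟩
      left_inv := fun _ => rfl
      right_inv := fun _ => rfl }

/-- The number of embeddings of `H` covering the potential edge `s`. -/
def coverCount (s : EdgeIdx n) : ℕ := #{φ : V ↪ Fin n | s ∈ edgeImage H φ}

lemma coverCount_le_coverCount (s t : EdgeIdx n) : coverCount H s ≤ coverCount H t := by
  obtain ⟨σ, h1, h2⟩ := MulAction.is_two_pretransitive_iff.1
    (Equiv.Perm.isMultiplyPretransitive (Fin n) 2) s.2.ne t.2.ne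
  rw [Equiv.Perm.smul_def] at h1 h2
  refine Finset.card_le_card_of_injOn (fun φ => φ.trans σ.toEmbedding) (fun φ hφ => ?_)
    fun φ _ χ _ h => DFunLike.ext _ _ fun a => by simpa using DFunLike.congr_fun h a
  obtain ⟨a, b, hab, ha, hb⟩ := mem_edgeImage.1 (Finset.mem_filter.1 hφ).2
  exact Finset.mem_coe.2 (Finset.mem_filter.2
    ⟨mem_univ _, mem_edgeImage.2 ⟨a, b, hab, by simp [ha, h1], by simp [hb, h2]⟩⟩)

lemma choose_two_mul_coverCount (s : EdgeIdx n) :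
    n.choose 2 * coverCount H s = eCount H * n.descFactorial (Fintype.card V) := by
  calc n.choose 2 * coverCount H s = ∑ t : EdgeIdx n, coverCount H t := by
        rw [Finset.sum_congr rfl fun t _ =>
          (coverCount_le_coverCount H t s).antisymm (coverCount_le_coverCount H s t),
          Finset.sum_const, Finset.card_univ, card_edgeIdx, smul_eq_mul]
    _ = ∑ φ : V ↪ Fin n, #(edgeImage H φ) := by
        simp_rw [coverCount, Finset.card_filter]
        rw [Finset.sum_comm]
        simp_rw [← Finset.card_filter, Finset.filter_univ_mem]
    _ = eCount H * n.descFactorial (Fintype.card V) := by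
        simp_rw [card_edgeImage]
        rw [Finset.sum_const, Finset.card_univ, Fintype.card_embedding_eq, Fintype.card_fin,
          smul_eq_mul, mul_comm]

lemma card_cover_pair_mul_pow_three_le {s t : EdgeIdx n} (hst : s ≠ t) :
    #{φ : V ↪ Fin n | s ∈ edgeImage H φ ∧ t ∈ edgeImage H φ} * n ^ 3 ≤
      Fintype.card V ^ 3 * n ^ Fintype.card V := by
  obtain ⟨x, hx, hx1, hx2⟩ := exists_mem_edgeIdx_of_ne hst
  have h := card_embedding_exists_apply_eq_mul_pow_three_le (V := V) s.2.ne hx1 hx2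
  rw [Fintype.card_fin] at h
  refine (Nat.mul_le_mul_right _ (Finset.card_le_card fun φ hφ => ?_)).trans h
  obtain ⟨-, hs, ht⟩ := Finset.mem_filter.1 hφ
  obtain ⟨a, b, -, ha, hb⟩ := mem_edgeImage.1 hs
  obtain ⟨c, d, -, hc, hd⟩ := mem_edgeImage.1 ht
  refine Finset.mem_filter.2 ⟨mem_univ _, ⟨a, ha⟩, ⟨b, hb⟩, ?_⟩
  rcases hx with rfl | rfl
  exacts [⟨c, hc⟩, ⟨d, hd⟩]

end EdgeImage

section EdgeCount

open Filter Topology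

lemma tendsto_zpow_mul_descFactorial_div_choose_two (v : ℕ) :
    Tendsto (fun n : ℕ => (n : ℝ) ^ ((2 : ℤ) - (v : ℤ)) * (n.descFactorial v / n.choose 2))
      atTop (𝓝 2) := by
  refine (Asymptotics.isEquivalent_const_iff_tendsto two_ne_zero).1
    ((Asymptotics.IsEquivalent.refl.mul
      ((isEquivalent_descFactorial v).div (isEquivalent_choose 2))).congr_right ?_)
  filter_upwards [eventually_gt_atTop 0] with n hn
  have hn0 : (n : ℝ) ≠ 0 := by positivity
  simp only [Pi.mul_apply, Pi.div_apply, zpow_sub₀ hn0, zpow_natCast, zpow_ofNat, Nat.factorial]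
  field_simp
  norm_num

variable {k : ℕ} (β : Fin (k + 1) → ℝ) (v : Fin (k + 1) → ℕ)
  (H : ∀ j : Fin (k + 1), SimpleGraph (Fin (v j)))

/-- The coefficient `β_j n^{2-v_j}` of an embedded copy of one of the graphs `H j`. -/
def ergmCopyWeight (n : ℕ) (α : Σ j, Fin (v j) ↪ Fin n) : ℝ :=
  β α.1 * (n : ℝ) ^ ((2 : ℤ) - (v α.1 : ℤ))

/-- The potential edges covered by an embedded copy of one of the graphs `H j`. -/
def ergmCopyEdges (n : ℕ) (α : Σ j, Fin (v j) ↪ Fin n) : Finset (EdgeIdx n) :=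
  edgeImage (H α.1) α.2

/-- The exponent of the ERGM weight, as a polynomial in the edge indicators with one monomial for
each embedded copy of each `H j`. -/
def ergmEnergy (n : ℕ) : (EdgeIdx n → Bool) → ℝ :=
  energy (ergmCopyWeight β v n) (ergmCopyEdges v H n)

lemma ergmWeight_eq_exp_ergmEnergy (n : ℕ) (y : EdgeIdx n → Bool) :
    ergmWeight β v H n y = exp (ergmEnergy β v H n y) := by
  simp only [ergmWeight, ergmEnergy, energy, Finset.sum_apply, Pi.smul_apply, smul_eq_mul,
    Fintype.sum_sigma, homCount_eq_sum, Finset.mul_sum, ergmCopyWeight, ergmCopyEdges]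

lemma ergmProb_eq_gibbs (n : ℕ) : ergmProb β v H n = gibbs (ergmEnergy β v H n) := by
  funext y
  simp_rw [ergmProb, ergmZ, ergmWeight_eq_exp_ergmEnergy]
  rfl

lemma ergmExp_eq_gibbsMean (n : ℕ) : ergmExp β v H n = gibbsMean (ergmEnergy β v H n) := by
  funext F
  rw [ergmExp, ergmProb_eq_gibbs, gibbsMean_apply]

lemma Wn_eq_scaledTotal (p : ℝ) (n : ℕ) :
    Wn β v H p n = scaledTotal (ergmEnergy β v H n) √(sigmaSq β v H p n) := by
  funext y
  rw [Wn, muN, ergmExp_eq_gibbsMean]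
  rfl

lemma sum_ergmCopy_mem {n : ℕ} (s : EdgeIdx n) (f : ℕ → ℝ) :
    (∑ α, if s ∈ ergmCopyEdges v H n α then
        ergmCopyWeight β v n α * f #(ergmCopyEdges v H n α) else 0) =
      ∑ j, β j * eCount (H j) * f (eCount (H j)) *
        ((n : ℝ) ^ ((2 : ℤ) - (v j : ℤ)) * (n.descFactorial (v j) / n.choose 2)) := by
  have hcover (j) : (coverCount (H j) s : ℝ) =
      eCount (H j) * (n.descFactorial (v j) / n.choose 2) := by
    have hne : (n.choose 2 : ℝ) ≠ 0 := by
      rw [← card_edgeIdx]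
      exact_mod_cast (Fintype.card_pos_iff.2 ⟨s⟩).ne'
    have h := choose_two_mul_coverCount (H j) s
    rw [Fintype.card_fin] at h
    rw [← mul_div_assoc, eq_div_iff hne, mul_comm]
    exact_mod_cast h
  rw [Fintype.sum_sigma]
  refine Finset.sum_congr rfl fun j _ => ?_
  simp only [ergmCopyEdges, ergmCopyWeight, card_edgeImage]
  rw [← Finset.sum_filter, Finset.sum_const, nsmul_eq_mul, ← coverCount, hcover]
  ring

lemma eventually_abs_sum_ergmCopy_mem_sub_le (f : ℕ → ℝ) {η : ℝ} (hη : 0 < η) :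
    ∀ᶠ n : ℕ in atTop, ∀ s : EdgeIdx n,
      |(∑ α, if s ∈ ergmCopyEdges v H n α then
          ergmCopyWeight β v n α * f #(ergmCopyEdges v H n α) else 0) -
        2 * ∑ j, β j * eCount (H j) * f (eCount (H j))| ≤ η := by
  have hlim := tendsto_finsetSum univ fun j _ =>
    (tendsto_zpow_mul_descFactorial_div_choose_two (v j)).const_mul
      (β j * eCount (H j) * f (eCount (H j)))
  rw [← Finset.sum_mul, mul_comm] at hlim
  filter_upwards [Metric.tendsto_nhds.1 hlim η hη] with n hn s
  rw [sum_ergmCopy_mem]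
  exact hn.le

lemma mul_coupling_ergmCopy_le {n : ℕ} (hn : 0 < n) (s t : EdgeIdx n) :
    n * coupling (ergmCopyWeight β v n) (ergmCopyEdges v H n) s t ≤
      ∑ j, |β j| * (v j : ℝ) ^ 3 := by
  simp_rw [coupling, ← ite_and, Fintype.sum_sigma, Finset.mul_sum (s := univ (α := Fin (k + 1)))]
  refine Finset.sum_le_sum fun j _ => ?_
  rcases eq_or_ne s t with rfl | hst
  · simp only [Finset.notMem_erase, false_and, if_false, Finset.sum_const_zero, mul_zero]
    positivity
  simp only [ergmCopyEdges, ergmCopyWeight, Finset.mem_erase, hst.symm, ne_eq, not_false_eq_true,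
    true_and]
  rw [← Finset.sum_filter, Finset.sum_const, nsmul_eq_mul]
  simp_rw [and_comm (a := t ∈ _)]
  set c := #{φ : Fin (v j) ↪ Fin n | s ∈ edgeImage (H j) φ ∧ t ∈ edgeImage (H j) φ}
  have hc : (c : ℝ) * (n : ℝ) ^ 3 / (n : ℝ) ^ v j ≤ (v j : ℝ) ^ 3 := by
    have h := card_cover_pair_mul_pow_three_le (H j) hst
    rw [Fintype.card_fin] at h
    rw [div_le_iff₀ (by positivity)]
    exact_mod_cast h
  calc (n : ℝ) * (c * (β j * (n : ℝ) ^ ((2 : ℤ) - (v j : ℤ))))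
      = β j * (c * (n : ℝ) ^ 3 / (n : ℝ) ^ v j) := by
        rw [zpow_sub₀ (by positivity), zpow_natCast, zpow_ofNat]
        field_simp
    _ ≤ |β j| * (v j : ℝ) ^ 3 := by
        gcongr
        exact le_abs_self _

/-- The derivative `Φ_β'` of `PhiFn`, as an explicit polynomial. -/
def phiSlope (q : ℝ) : ℝ :=
  ∑ j, β j * eCount (H j) * ((eCount (H j) - 1 : ℕ) * q ^ (eCount (H j) - 2))

lemma hasDerivAt_PhiFn (q : ℝ) : HasDerivAt (PhiFn β v H) (phiSlope β v H q) q :=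
  HasDerivAt.fun_sum fun j _ => (hasDerivAt_pow (eCount (H j) - 1) q).const_mul _

lemma phiFn_eq_sigmoid (q : ℝ) : phiFn β v H q = sigmoid (2 * PhiFn β v H q) := by
  rw [phiFn, sigmoid_def, exp_neg]
  field_simp

lemma deriv_phiFn {p : ℝ} (hfix : phiFn β v H p = p) :
    deriv (phiFn β v H) p = p * (1 - p) * (2 * phiSlope β v H p) := by
  have h := (hasDerivAt_sigmoid (2 * PhiFn β v H p)).comp p
    ((hasDerivAt_PhiFn β v H p).const_mul 2)
  rw [← phiFn_eq_sigmoid, hfix] at h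
  have hcomp : phiFn β v H = sigmoid ∘ fun q => 2 * PhiFn β v H q :=
    funext (phiFn_eq_sigmoid β v H)
  rw [hcomp, h.deriv]

lemma sigmaSq_eq (p : ℝ) (n : ℕ) :
    sigmaSq β v H p n = Fintype.card (EdgeIdx n) *
      (p * (1 - p) / (1 - p * (1 - p) * (2 * phiSlope β v H p))) := by
  rw [sigmaSq, (hasDerivAt_PhiFn β v H p).deriv, card_edgeIdx, Nat.cast_choose_two]
  ring_nf

lemma tendsto_card_edgeIdx : Tendsto (fun n => Fintype.card (EdgeIdx n)) atTop atTop := by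
  simp_rw [card_edgeIdx]
  refine tendsto_atTop_mono' _ ?_ (tendsto_sub_atTop_nat 1)
  filter_upwards [eventually_ge_atTop 2] with n hn
  rw [Nat.choose_two_right, Nat.le_div_iff_mul_le two_pos, mul_comm]
  exact Nat.mul_le_mul_right _ hn

lemma meanField_ergm (hβ : ∀ j, eCount (H j) ≤ 1 ∨ 0 ≤ β j) :
    MeanField (ergmEnergy β v H) (fun q => 2 * PhiFn β v H q)
      fun q => 2 * phiSlope β v H q := by
  have hferro (n) : IsFerromagnetic (ergmCopyWeight β v n) (ergmCopyEdges v H n) := fun α =>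
    (hβ α.1).symm.imp (fun h => mul_nonneg h (by positivity))
      ((card_edgeImage (H α.1) α.2).trans_le ·)
  refine meanField_energy (fun n => (card_edgeIdx n).trans_le (Nat.choose_le_pow n 2))
    hferro
    (fun n α => (card_edgeImage _ _).trans_le
      (Finset.single_le_sum (f := fun j => eCount (H j)) (fun _ _ => Nat.zero_le _)
        (mem_univ α.1)))
    ((eventually_gt_atTop 0).mono fun n hn => mul_coupling_ergmCopy_le β v H hn)
    (fun q _ η => eventually_abs_sum_ergmCopy_mem_sub_le β v H fun e => q ^ (e - 1))
    (fun q _ η => eventually_abs_sum_ergmCopy_mem_sub_le β v H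
      fun e => (e - 1 : ℕ) * q ^ (e - 2)) ?_ ?_
  · unfold PhiFn
    fun_prop
  · unfold phiSlope
    fun_prop

theorem ergm_edge_count_clt_general (hβ : ∀ j, eCount (H j) ≤ 1 ∨ 0 ≤ β j) (p : ℝ)
    (hfix : phiFn β v H p = p)
    (huniq : ∀ q ∈ Set.Ioo (0 : ℝ) 1, phiFn β v H q = q → q = p)
    (hsub : deriv (phiFn β v H) p < 1) (ψ : ℝ → ℝ) (hψ : Continuous ψ)
    (hbdd : ∃ M : ℝ, ∀ t : ℝ, |ψ t| ≤ M) :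
    Tendsto (fun n : ℕ => ∑ y : EdgeIdx n → Bool, ergmProb β v H n y * ψ (Wn β v H p n y))
      atTop (𝓝 (∫ z, ψ z ∂(gaussianReal 0 1))) := by
  obtain ⟨M, hM⟩ := hbdd
  have hmem {q : ℝ} (hq : phiFn β v H q = q) : q ∈ Set.Ioo (0 : ℝ) 1 := by
    rw [← hq, phiFn_eq_sigmoid]
    exact ⟨sigmoid_pos _, sigmoid_lt_one _⟩
  have hp (q : ℝ) : sigmoid (2 * PhiFn β v H q) = q ↔ q = p := by
    rw [← phiFn_eq_sigmoid]
    exact ⟨fun hq => huniq q (hmem hq) hq, fun hq => hq ▸ hfix⟩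
  rw [deriv_phiFn β v H hfix] at hsub
  have hden : 0 < 1 - p * (1 - p) * (2 * phiSlope β v H p) := sub_pos.2 hsub
  have hratio : 0 < p * (1 - p) / (1 - p * (1 - p) * (2 * phiSlope β v H p)) :=
    div_pos (mul_pos (hmem hfix).1 (sub_pos.2 (hmem hfix).2)) hden
  have hr : Tendsto (fun n => √(sigmaSq β v H p n)) atTop atTop := by
    simp_rw [sigmaSq_eq]
    exact tendsto_sqrt_atTop.comp
      ((tendsto_natCast_atTop_atTop.comp tendsto_card_edgeIdx).atTop_mul_const hratio)
  have hvar (n : ℕ) : (1 - p * (1 - p) * (2 * phiSlope β v H p)) * √(sigmaSq β v H p n) ^ 2 =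
      p * (1 - p) * Fintype.card (EdgeIdx n) := by
    rw [sigmaSq_eq, sq_sqrt (by positivity), mul_left_comm, mul_div_cancel₀ _ hden.ne', mul_comm]
  simp_rw [ergmProb_eq_gibbs, Wn_eq_scaledTotal]
  exact (meanField_ergm β v H hβ).tendsto_gibbsMean_scaledTotal hp hsub hr hvar
    (BoundedContinuousFunction.ofNormedAddCommGroup ψ hψ M hM)

end EdgeCount

/-- **CLT for the edge count of subcritical ERGMs**: the standardized number of edges `W_n`
converges in distribution, as `n → ∞`, to a standard normal random variable (stated via
convergence of expectations of bounded continuous test functions). -/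
theorem ergm_edge_count_clt {k : ℕ} (β : Fin (k + 1) → ℝ) (v : Fin (k + 1) → ℕ)
    (H : ∀ j : Fin (k + 1), SimpleGraph (Fin (v j)))
    -- `β₂, …, β_k > 0`
    (hβ : ∀ j : Fin (k + 1), j ≠ 0 → 0 < β j)
    -- `H₁` is a single edge
    (hv0 : v 0 = 2) (he0 : eCount (H 0) = 1)
    -- the graphs have no isolated vertices
    (hnoiso : ∀ (j : Fin (k + 1)) (a : Fin (v j)), ∃ b, (H j).Adj a b)
    -- `H₂, …, H_k` have at least two edges
    (hedges : ∀ j : Fin (k + 1), j ≠ 0 → 2 ≤ eCount (H j))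
    -- the subcritical region: unique fixed point `p ∈ (0,1)` with `φ_β'(p) < 1`
    (p : ℝ) (hp : p ∈ Set.Ioo (0 : ℝ) 1)
    (hfix : phiFn β v H p = p)
    (huniq : ∀ q ∈ Set.Ioo (0 : ℝ) 1, phiFn β v H q = q → q = p)
    (hsub : deriv (phiFn β v H) p < 1) :
    ∀ ψ : ℝ → ℝ, Continuous ψ → (∃ M : ℝ, ∀ t : ℝ, |ψ t| ≤ M) →
      Filter.Tendsto
        (fun n : ℕ => ∑ y : EdgeIdx n → Bool, ergmProb β v H n y * ψ (Wn β v H p n y))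
        Filter.atTop (nhds (∫ z, ψ z ∂(gaussianReal 0 1))) := by
  exact ergm_edge_count_clt_general β v H
    (fun j => (eq_or_ne j 0).imp (fun hj => by rw [hj, he0]) fun hj => (hβ j hj).le)
    p hfix huniq hsub
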